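/- arXiv:1807.08842 — 4 statements merged into one kernel-verified Lean document; each statement's English description precedes it below -/
import Mathlib

section
/- Suppose d ≥ 5 and m_1,…,m_d are integers, all at least 2, such that d > max(3 + 2·Σ_{i=1}^d 1/m_i, 4 + Σ_{i=1}^d 1/m_i). Set μ = d − 2 − Σ 1/m_i (the measure of the genus-zero oriented Fuchsian group with elliptic generator orders m_1,…,m_d), ν = max(2, 1 + Σ 1/m_i), N_1 = max((2 + Σ 1/m_i)/μ, m_1, …, m_d) + 1 and N_2 = max(N_1, (d+16)/(4(μ−2)) + 1). Then for every integer n ≥ ν·N_2 + Σ_{i=1}^d m_i there exists B such that for all prime powers q > B with q ≡ 1 (mod m_i) for all i, the group SL_n(q) is (m_1,…,m_d)-generated: there exist g_1,…,g_d ∈ SL_n(q) with g_1^{m_1} = ⋯ = g_d^{m_d} = 1, g_1⋯g_d = 1, and ⟨g_1,…,g_d⟩ = SL_n(q). -/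
/-!
The bound on `d` gives `Σ (1 - 2 / m i) > 3`, so at least four of the orders are at least `3`
(`four_le_card`). All other generators are taken to be `1`, and it suffices to generate `SL_n(q)`,
for `n ≥ 5` and `q` large, by four elements with product one and orders dividing four given
divisors `m i ≥ 3` of `q - 1` (`four_generators`).

Let `l` generate the multiplicative group of the field. The matrix `P` (`prodMat`) has
eigenvalues `l, l, l²,…, l², l⁻²,…, l⁻²` and possibly one `1`, and is diagonal up to a single
Jordan block for `l`. It is factored in two ways as `P = Y₁ X₁ = Y₃ X₃`, and the generators are
`Y₁, X₁, X₃⁻¹, Y₃⁻¹`. Each factorisation is assembled from a `3 × 3` block (`special_exists`),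
`2 × 2` blocks (`pair_exists`), and a triangular glue to the fixed vector, if there is one
(`lower_exists`, `upper_exists`). Every factor is annihilated by `(T - 1)(T - ζ)(T - ζ⁻¹)` for a
primitive `m i`-th root of unity `ζ`, so its order divides `m i` (`CubicRel.pow_eq_one`).

The basis vectors other than the two in the Jordan block are `l²`-eigenvectors `b i` and
`l⁻²`-eigenvectors `c k`, with one more `c` than `b`, and the fixed vector. The `2 × 2` blocks of
the first factorisation pair `b i` with `c (i + 1)`, those of the second pair `b i` with `c i`, so
together they link all of the `b i` and `c k` into a chain.

For generation: `P ^ q` is the diagonal part of `P`, so the generated group contains a torus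
element and a transvection. Inside the special block, commutators and the torus yield full root
subgroups (`special_block`); the whole field is reached because an additive subgroup stable under
`l⁻³` is stable under a large subring (`addSubgroup_eq_top`). The chain then spreads these to all
elementary root subgroups (`elemIn_all`), and these generate `SL_n`
(`eq_top_of_transvection`).
-/

open scoped BigOperators
open Matrix

/-! ### Root subgroups in a group of matrices -/

section Calculus

variable {ι F : Type*} [Fintype ι] [DecidableEq ι] [Field F]

/-- The whole root subgroup `{1 + x • v fᵗ}` lies in `H`. -/
def RootIn (H : Submonoid (Matrix ι ι F)) (v f : ι → F) : Prop :=
  ∀ x : F, 1 + x • vecMulVec v f ∈ H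

/-- `H` is closed under inverses, i.e. it is a group of matrices. -/
def InvClosed (H : Submonoid (Matrix ι ι F)) : Prop :=
  ∀ a ∈ H, ∃ b ∈ H, a * b = 1

lemma one_add_mul_one_add_of_sq {v f w g : ι → F} (h : f ⬝ᵥ w = 0) (x y : F) :
    (1 + x • vecMulVec v f) * (1 + y • vecMulVec w g)
      = 1 + x • vecMulVec v f + y • vecMulVec w g := by
  simp [mul_add, add_mul, vecMulVec_mul_vecMulVec, h, add_assoc]

lemma mem_inv {H : Submonoid (Matrix ι ι F)} (hH : InvClosed H) {a b : Matrix ι ι F}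
    (ha : a ∈ H) (hab : a * b = 1) : b ∈ H := by
  obtain ⟨c, hc, hac⟩ := hH a ha
  have : c = b := by
    have hca : c * a = 1 := mul_eq_one_comm.mp hac
    calc c = c * (a * b) := by rw [hab, mul_one]
      _ = b := by rw [← mul_assoc, hca, one_mul]
  exact this ▸ hc

lemma mem_neg {H : Submonoid (Matrix ι ι F)} (hH : InvClosed H) {v f : ι → F}
    (hfv : f ⬝ᵥ v = 0) {x : F} (h : 1 + x • vecMulVec v f ∈ H) :
    1 + (-x) • vecMulVec v f ∈ H :=
  mem_inv hH h (by rw [one_add_mul_one_add_of_sq hfv]; simp)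

lemma mem_conj {H : Submonoid (Matrix ι ι F)} (hH : InvClosed H) {y : Matrix ι ι F}
    (hy : y ∈ H) {v f : ι → F} {x : F} (h : 1 + x • vecMulVec v (f ᵥ* y) ∈ H) :
    1 + x • vecMulVec (y *ᵥ v) f ∈ H := by
  obtain ⟨z, hz, hyz⟩ := hH y hy
  have key : y * (1 + x • vecMulVec v (f ᵥ* y)) * z = 1 + x • vecMulVec (y *ᵥ v) f := by
    rw [mul_add, add_mul, mul_one, hyz, mul_smul_comm, smul_mul_assoc, mul_vecMulVec,
      vecMulVec_mul, vecMul_vecMul, hyz, vecMul_one]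
  exact key ▸ H.mul_mem (H.mul_mem hy h) hz

lemma commutator_identity {R : Type*} [Ring R] {A B : R} (hA : A * A = 0) (hB : B * B = 0)
    (hBA : B * A = 0) : (1 + A) * (1 + B) * ((1 - A) * (1 - B)) = 1 + A * B := by
  have h1 : (1 + A) * (1 + B) = 1 + A + B + A * B := by noncomm_ring
  have h2 : (1 - A) * (1 - B) = 1 - A - B + A * B := by noncomm_ring
  have e : (1 + A + B + A * B) * (1 - A - B + A * B) = 1 + A * B - A * A - B * B - B * A
      + (A * A) * B - A * (B * A) - A * (B * B) + (B * A) * B + A * (B * A) * B := by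
    noncomm_ring
  rw [h1, h2, e]; simp [hA, hB, hBA]

/-- Commutator rule: `[1 + x v f, 1 + y w g] = 1 + x y f(w) v g` when `g(v) = 0`. -/
lemma mem_comm {H : Submonoid (Matrix ι ι F)} (hH : InvClosed H) {v f w g : ι → F} {x y : F}
    (h₁ : 1 + x • vecMulVec v f ∈ H) (h₂ : 1 + y • vecMulVec w g ∈ H)
    (hfv : f ⬝ᵥ v = 0) (hgw : g ⬝ᵥ w = 0) (hgv : g ⬝ᵥ v = 0) :
    1 + (x * y * (f ⬝ᵥ w)) • vecMulVec v g ∈ H := by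
  have key := commutator_identity (A := x • vecMulVec v f) (B := y • vecMulVec w g)
    (by simp [vecMulVec_mul_vecMulVec, hfv]) (by simp [vecMulVec_mul_vecMulVec, hgw])
    (by simp [vecMulVec_mul_vecMulVec, hgv])
  have h3 := mem_neg hH hfv h₁
  have h4 := mem_neg hH hgw h₂
  rw [neg_smul, ← sub_eq_add_neg] at h3 h4
  have hm := H.mul_mem (H.mul_mem h₁ h₂) (H.mul_mem h3 h4)
  rw [key] at hm
  convert hm using 2
  simp [vecMulVec_mul_vecMulVec, smul_smul, vecMulVec_smul, mul_comm, mul_left_comm]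

namespace RootIn

variable {H : Submonoid (Matrix ι ι F)} {v w f g : ι → F}

lemma add_left (h₁ : RootIn H v f) (h₂ : RootIn H w f) (hw : f ⬝ᵥ w = 0) :
    RootIn H (v + w) f := fun x => by
  have := H.mul_mem (h₁ x) (h₂ x)
  rwa [one_add_mul_one_add_of_sq hw, add_assoc, ← smul_add, ← add_vecMulVec] at this

lemma add_right (h₁ : RootIn H v f) (h₂ : RootIn H v g) (hf : f ⬝ᵥ v = 0) :
    RootIn H v (f + g) := fun x => by
  have := H.mul_mem (h₁ x) (h₂ x)
  rwa [one_add_mul_one_add_of_sq hf, add_assoc, ← smul_add, ← vecMulVec_add] at this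

lemma smul_left (h : RootIn H v f) (c : F) : RootIn H (c • v) f := fun x => by
  simpa [smul_vecMulVec, smul_smul] using h (x * c)

lemma smul_right (h : RootIn H v f) (c : F) : RootIn H v (c • f) := fun x => by
  simpa [vecMulVec_smul, smul_smul] using h (x * c)

lemma of_smul_left {c : F} (hc : c ≠ 0) (h : RootIn H (c • v) f) : RootIn H v f := by
  simpa [smul_smul, hc] using h.smul_left c⁻¹

lemma of_smul_right {c : F} (hc : c ≠ 0) (h : RootIn H v (c • f)) : RootIn H v f := by
  simpa [smul_smul, hc] using h.smul_right c⁻¹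

lemma conj (hH : InvClosed H) {y : Matrix ι ι F} (hy : y ∈ H) (h : RootIn H v (f ᵥ* y)) :
    RootIn H (y *ᵥ v) f := fun x => mem_conj hH hy (h x)

lemma comm (hH : InvClosed H) (h₁ : RootIn H v f) (h₂ : RootIn H w g)
    (hfv : f ⬝ᵥ v = 0) (hgw : g ⬝ᵥ w = 0) (hgv : g ⬝ᵥ v = 0) (hfw : f ⬝ᵥ w ≠ 0) :
    RootIn H v g := fun x => by
  simpa [hfw] using mem_comm hH (h₁ (x * (f ⬝ᵥ w)⁻¹)) (h₂ 1) hfv hgw hgv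

end RootIn

end Calculus

/-! ### Additive subgroups of a finite field with many multipliers -/

section FieldLemma

/-- If the powers of `c` fill at least a third of the units of a finite field with more than four
elements, a nonzero additive subgroup stable under multiplication by `c` is everything: its ring
of multipliers is a subfield containing `c`, and a proper subfield has at most `√q` elements. -/
lemma addSubgroup_eq_top {F : Type*} [Field F] [Fintype F] (hq : 4 < Fintype.card F) {c : F}
    (hc0 : c ≠ 0)
    (hc : Fintype.card F ≤ 3 * orderOf c + 1) (A : AddSubgroup F) {a : F} (ha : a ∈ A)
    (ha0 : a ≠ 0) (hA : ∀ x ∈ A, c * x ∈ A) (x : F) : x ∈ A := by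
  classical
  let R : Subring F :=
    { carrier := {r | ∀ x ∈ A, r * x ∈ A}
      mul_mem' := fun {r s} hr hs x hx => by
        simpa [mul_assoc] using hr _ (hs x hx)
      one_mem' := fun x hx => by simpa using hx
      add_mem' := fun {r s} hr hs x hx => by
        simpa [add_mul] using A.add_mem (hr x hx) (hs x hx)
      zero_mem' := fun x _ => by simp
      neg_mem' := fun {r} hr x hx => by simpa using A.neg_mem (hr x hx) }
  have hcR : c ∈ R := hA
  have hinv : ∀ r ∈ R, r⁻¹ ∈ R := by
    intro r hr
    by_cases h0 : r = 0
    · simp [h0, R.zero_mem]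
    have h1 := FiniteField.pow_card_sub_one_eq_one r h0
    have : r⁻¹ = r ^ (Fintype.card F - 2) := by
      rw [inv_eq_of_mul_eq_one_right]
      rw [← pow_succ', ← h1]; congr 1; omega
    rw [this]; exact R.pow_mem hr _
  -- the powers of `c`, together with `0`, give many elements of `R`
  have hcard : orderOf c + 1 ≤ Fintype.card R := by
    have hsub : insert (0 : F) ((Finset.range (orderOf c)).image (c ^ ·)) ⊆
        Finset.univ.filter (· ∈ R) := by
      intro z hz
      simp only [Finset.mem_insert, Finset.mem_image, Finset.mem_range] at hz
      rcases hz with rfl | ⟨k, _, rfl⟩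
      · simp [R.zero_mem]
      · simp [R.pow_mem hcR k]
    have := Finset.card_le_card hsub
    rw [Finset.card_insert_of_notMem (by simp [hc0]), Finset.card_image_of_injOn] at this
    · rw [Fintype.card_subtype]; simpa using this
    · intro i hi k hk h
      exact pow_injOn_Iio_orderOf (by simpa using hi) (by simpa using hk) h
  have htop : ∀ z : F, z ∈ R := by
    by_contra! hz
    obtain ⟨z, hz⟩ := hz
    have hinj : Function.Injective (fun p : R × R => (p.1 : F) + p.2 * z) := by
      rintro ⟨r, s⟩ ⟨r', s'⟩ h
      simp only at h
      have h2 : ((s : F) - s') * z = r' - r := by linear_combination h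
      by_cases hs : (s : F) - s' = 0
      · rw [hs, zero_mul] at h2
        exact Prod.ext (Subtype.ext (sub_eq_zero.mp h2.symm).symm) (Subtype.ext (sub_eq_zero.mp hs))
      · refine absurd ?_ hz
        have : z = ((s : F) - s')⁻¹ * (r' - r) := by rw [← h2]; field_simp
        rw [this]
        exact R.mul_mem (hinv _ (R.sub_mem s.2 s'.2)) (R.sub_mem r'.2 r.2)
    have := Fintype.card_le_of_injective _ hinj
    rw [Fintype.card_prod] at this
    nlinarith
  have := htop (x * a⁻¹) a ha
  simpa [mul_assoc, ha0] using this

end FieldLemma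

/-! ### Root subgroups inside the special block -/

section Special

variable {ι F : Type*} [Fintype ι] [DecidableEq ι] [Field F]

/-- The elementary root subgroup `{1 + x E_{ij}}` lies in `H`. -/
abbrev ElemIn (H : Submonoid (Matrix ι ι F)) (i j : ι) : Prop :=
  RootIn H (Pi.single i 1) (Pi.single j 1)

lemma diagonal_mulVec_single' (d : ι → F) (i : ι) :
    diagonal d *ᵥ Pi.single i 1 = d i • Pi.single i 1 := by
  ext k
  by_cases h : k = i
  · subst h; simp [mulVec_diagonal]
  · simp [mulVec_diagonal, h]

lemma single_vecMul_diagonal' (d : ι → F) (i : ι) :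
    Pi.single i 1 ᵥ* diagonal d = d i • Pi.single i 1 := by
  ext k
  by_cases h : k = i
  · subst h; simp [vecMul_diagonal]
  · simp [vecMul_diagonal, h]

set_option maxHeartbeats 1000000 in
/-- From the torus element `diagonal d`, with eigenvalues `l, l, l⁻²` on the special block, one
transvection `1 + x E₁₂` and a matrix `y` preserving the block, one obtains the full root
subgroups between `i₁` and the other two indices. The matrix `y` moves the transvection to one
with nontrivial commutator; the torus then isolates a multiple of `E₃₂` and, acting on that root
group through `l⁻³`, fills up the whole field. -/
lemma special_block [Fintype F] {H : Submonoid (Matrix ι ι F)} (hH : InvClosed H)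
    (hq : 4 < Fintype.card F) {l : F} (hl0 : l ≠ 0) (hl3 : l ^ 3 ≠ 1)
    (hl : Fintype.card F ≤ 3 * orderOf (l ^ 3)⁻¹ + 1)
    {i₁ i₂ i₃ : ι} (h12 : i₁ ≠ i₂) (h13 : i₁ ≠ i₃) (h23 : i₂ ≠ i₃)
    {d : ι → F} (hD : diagonal d ∈ H) (hd1 : d i₁ = l) (hd2 : d i₂ = l) (hd3 : d i₃ = (l ^ 2)⁻¹)
    {x : F} (hx : x ≠ 0) (ht : 1 + x • vecMulVec (Pi.single i₁ 1) (Pi.single i₂ 1) ∈ H)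
    {y : Matrix ι ι F} (hy : y ∈ H) {w e : F} (hw : w ≠ 0)
    (hy1 : y *ᵥ Pi.single i₁ 1 = Pi.single i₁ 1 + Pi.single i₃ 1)
    (hy3 : y *ᵥ Pi.single i₃ 1 = w • Pi.single i₂ 1 + e • Pi.single i₃ 1)
    (hg : (w • Pi.single i₁ 1 + e • Pi.single i₂ 1 - w • Pi.single i₃ 1) ᵥ* y = Pi.single i₂ 1) :
    ElemIn H i₂ i₁ ∧ ElemIn H i₃ i₁ ∧ ElemIn H i₁ i₂ ∧ ElemIn H i₁ i₃ := by
  have hl3' : l ^ 3 - 1 ≠ 0 := sub_ne_zero.mpr hl3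
  set e1 : ι → F := Pi.single i₁ 1 with he1
  set e2 : ι → F := Pi.single i₂ 1 with he2
  set e3 : ι → F := Pi.single i₃ 1 with he3
  have d11 : e1 ⬝ᵥ e1 = 1 := by simp [he1]
  have d12 : e1 ⬝ᵥ e2 = 0 := by simp [he1, he2, h12]
  have d13 : e1 ⬝ᵥ e3 = 0 := by simp [he1, he3, h13]
  have d21 : e2 ⬝ᵥ e1 = 0 := by simp [he1, he2, h12.symm]
  have d22 : e2 ⬝ᵥ e2 = 1 := by simp [he2]
  have d23 : e2 ⬝ᵥ e3 = 0 := by simp [he2, he3, h23]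
  have d31 : e3 ⬝ᵥ e1 = 0 := by simp [he1, he3, h13.symm]
  have d32 : e3 ⬝ᵥ e2 = 0 := by simp [he2, he3, h23.symm]
  have d33 : e3 ⬝ᵥ e3 = 1 := by simp [he3]
  have De1 : diagonal d *ᵥ e1 = l • e1 := by rw [he1, diagonal_mulVec_single', hd1]
  have De2 : diagonal d *ᵥ e2 = l • e2 := by rw [he2, diagonal_mulVec_single', hd2]
  have De3 : diagonal d *ᵥ e3 = (l ^ 2)⁻¹ • e3 := by rw [he3, diagonal_mulVec_single', hd3]
  have eD1 : e1 ᵥ* diagonal d = l • e1 := by rw [he1, single_vecMul_diagonal', hd1]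
  have eD2 : e2 ᵥ* diagonal d = l • e2 := by rw [he2, single_vecMul_diagonal', hd2]
  have eD3 : e3 ᵥ* diagonal d = (l ^ 2)⁻¹ • e3 := by rw [he3, single_vecMul_diagonal', hd3]
  set g : ι → F := w • e1 + e • e2 - w • e3 with hgdef
  -- conjugating the transvection by `y`, then taking the commutator with it
  have ht' : 1 + x • vecMulVec (e1 + e3) g ∈ H := by
    rw [← hy1]; exact mem_conj hH hy (by rw [hg]; exact ht)
  have hgu : g ⬝ᵥ (e1 + e3) = 0 := by
    simp [hgdef, add_dotProduct, sub_dotProduct, d11, d13, d21, d23, d31, d33]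
  have hge1 : g ⬝ᵥ e1 = w := by
    simp [hgdef, add_dotProduct, sub_dotProduct, d11, d21, d31]
  have hc := mem_comm hH ht' ht hgu d21 (by simp [d21, d23])
  rw [hge1] at hc
  set s := x * x * w with hs
  have hs0 : s ≠ 0 := by simp [hs, hx, hw]
  have hcD : 1 + s • vecMulVec (e1 + (l ^ 3)⁻¹ • e3) e2 ∈ H := by
    have := mem_conj hH hD (v := e1 + e3) (f := l⁻¹ • e2) (x := s)
      (by rw [smul_vecMul, eD2, smul_smul, inv_mul_cancel₀ hl0, one_smul]; exact hc)
    convert this using 3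
    rw [mulVec_add, De1, De3, vecMulVec_smul, ← smul_vecMulVec, smul_add, smul_smul, smul_smul,
      inv_mul_cancel₀ hl0, one_smul]
    congr 3
    field_simp
  have hne : 1 + (s * ((l ^ 3)⁻¹ - 1)) • vecMulVec e3 e2 ∈ H := by
    have hm := mem_neg hH (by simp [d21, d23]) hc
    have := H.mul_mem hcD hm
    rw [one_add_mul_one_add_of_sq (by simp [d21, d23])] at this
    convert this using 1
    rw [add_vecMulVec, add_vecMulVec, smul_vecMulVec]
    module
  -- the set of `x` with `1 + x E₃₂ ∈ H` is everything
  let A : AddSubgroup F :=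
    { carrier := {z | 1 + z • vecMulVec e3 e2 ∈ H}
      add_mem' := fun {a b} ha hb => by
        have := H.mul_mem ha hb
        rw [one_add_mul_one_add_of_sq d23] at this
        simpa [add_smul, add_assoc] using this
      zero_mem' := by simp [H.one_mem]
      neg_mem' := fun {a} ha => mem_neg hH d23 ha }
  have h32 : RootIn H e3 e2 := by
    refine addSubgroup_eq_top hq (inv_ne_zero (pow_ne_zero 3 hl0)) hl A hne ?_ ?_
    · refine mul_ne_zero hs0 ?_
      rw [sub_ne_zero]
      simpa using hl3
    · intro z hz
      have := mem_conj hH hD (v := e3) (f := l⁻¹ • e2) (x := z)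
        (by rw [smul_vecMul, eD2, smul_smul, inv_mul_cancel₀ hl0, one_smul]; exact hz)
      show 1 + ((l ^ 3)⁻¹ * z) • vecMulVec e3 e2 ∈ H
      convert this using 2
      rw [De3, vecMulVec_smul, smul_vecMulVec, smul_smul, smul_smul]
      congr 1
      field_simp
  have hA1 : RootIn H (w • e2 + e • e3) g := by
    rw [← hy3]; exact RootIn.conj hH hy (by rw [hg]; exact h32)
  -- clearing the `e₃`-component of the vector by an element of the root group `E₃₂`
  have hA2 : RootIn H e2 (e1 - e3) := by
    have hc := RootIn.conj hH (h32 (-(e / w))) (v := w • e2 + e • e3) (f := w • (e1 - e3)) (by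
      convert hA1 using 1
      rw [vecMul_add, vecMul_one, vecMul_smul, vecMul_vecMulVec, smul_dotProduct, sub_dotProduct,
        d13, d33, hgdef]
      ext k
      simp
      field_simp
      ring)
    have hv : (1 + (-(e / w)) • vecMulVec e3 e2) *ᵥ (w • e2 + e • e3) = w • e2 := by
      rw [add_mulVec, one_mulVec, smul_mulVec, vecMulVec_mulVec, dotProduct_add, dotProduct_smul,
        dotProduct_smul, d22, d23]
      ext k
      simp
      field_simp
      ring
    rw [hv] at hc
    exact (hc.of_smul_left hw).of_smul_right hw
  -- the torus separates the two coordinates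
  have hA3 : RootIn H e2 (e1 - l ^ 3 • e3) := by
    have hc := RootIn.conj hH hD (v := e2) (f := l⁻¹ • e1 - l ^ 2 • e3) (by
      convert hA2 using 1
      rw [sub_vecMul, smul_vecMul, smul_vecMul, eD1, eD3, smul_smul, smul_smul,
        inv_mul_cancel₀ hl0, mul_inv_cancel₀ (pow_ne_zero 2 hl0), one_smul, one_smul])
    rw [De2] at hc
    have := (hc.of_smul_left hl0).smul_right l
    convert this using 1
    rw [smul_sub, smul_smul, smul_smul, mul_inv_cancel₀ hl0, one_smul]
    congr 2
    ring
  have h23' : RootIn H e2 e3 := by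
    have := hA2.add_right (hA3.smul_right (-1)) (by simp [sub_dotProduct, d12, d32])
    refine RootIn.of_smul_right hl3' ?_
    convert this using 1
    module
  have h21 : RootIn H e2 e1 := by
    have := hA2.add_right h23' (by simp [sub_dotProduct, d12, d32])
    simpa using this
  have h31 : RootIn H e3 e1 :=
    h32.comm hH h21 d23 d12 d13 (by simp [d22])
  have h13' : RootIn H e1 e3 := fun z => by
    have := mem_comm hH ht (h23' (x⁻¹ * z)) d21 d32 d31
    simpa [d22, hx] using this
  have h12' : RootIn H e1 e2 := h13'.comm hH h32 d31 d23 d21 (by simp [d33])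
  exact ⟨h21, h31, h12', h13'⟩

end Special

/-! ### Spreading root subgroups along the basis -/

/-- The `3 + 2j + t` basis vectors: two vectors `A0`, `A1` carrying the Jordan block, the
`l²`-eigenvectors `b i`, the `l⁻²`-eigenvectors `c k`, and `t` fixed vectors `f i` (with `t ≤ 1`
in the application, to reach both parities of the dimension). -/
inductive Idx (j t : ℕ) where
  | A0 : Idx j t
  | A1 : Idx j t
  | b (i : Fin j) : Idx j t
  | c (k : Fin (j + 1)) : Idx j t
  | f (i : Fin t) : Idx j t
  deriving DecidableEq, Fintype

section Walk

variable {F : Type*} [Field F]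

/-- Every transvection along the covector `f` lies in `H`. -/
def FullCovector {ι : Type*} [Fintype ι] [DecidableEq ι] (H : Submonoid (Matrix ι ι F))
    (f : ι → F) : Prop :=
  ∀ v, f ⬝ᵥ v = 0 → RootIn H v f

namespace FullCovector

variable {ι : Type*} [Fintype ι] [DecidableEq ι] {H : Submonoid (Matrix ι ι F)} {f g : ι → F}

lemma vecMul (hH : InvClosed H) (h : FullCovector H f) {y : Matrix ι ι F} (hy : y ∈ H) :
    FullCovector H (f ᵥ* y) := by
  intro v hv
  rw [← dotProduct_mulVec] at hv
  obtain ⟨z, hz, hyz⟩ := hH y hy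
  have h1 := RootIn.conj hH hz (v := y *ᵥ v) (f := f ᵥ* y)
    (by rw [vecMul_vecMul, hyz, vecMul_one]; exact h _ hv)
  rwa [mulVec_mulVec, mul_eq_one_comm.mp hyz, one_mulVec] at h1

/-- A transvection along `f` which moves `g` moves it by a multiple of `f`. -/
lemma add_smul (hH : InvClosed H) (hf : FullCovector H f) (hg : FullCovector H g) {a : ι → F}
    (hfa : f ⬝ᵥ a = 0) (hga : g ⬝ᵥ a ≠ 0) (r : F) : FullCovector H (g + r • f) := by
  have := hg.vecMul hH (hf a hfa (r * (g ⬝ᵥ a)⁻¹))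
  convert this using 1
  rw [vecMul_add, vecMul_one, vecMul_smul, vecMul_vecMulVec, smul_smul, mul_assoc,
    inv_mul_cancel₀ hga, mul_one]

lemma of_smul {r : F} (hr : r ≠ 0) (h : FullCovector H (r • f)) : FullCovector H f := by
  intro v hv
  exact (h v (by simp [hv])).of_smul_right hr

/-- If `f` and `r eₖ + s f` are full and `f` vanishes at `k`, then `eₖ` is full. -/
lemma extract (hH : InvClosed H) {k : ι} {r s : F} (hr : r ≠ 0) (hf : FullCovector H f)
    (hfk : f k = 0) (h : FullCovector H (r • Pi.single k 1 + s • f)) :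
    FullCovector H (Pi.single k 1) := by
  have := add_smul hH hf h (a := Pi.single k 1) (by simp [hfk]) (by simp [hfk, hr]) (-s)
  refine of_smul hr ?_
  convert this using 1
  module

end FullCovector

variable {j t : ℕ}

open Idx

/-- Two matrices `y₁`, `y₃` that fix the covector `A0` and link the remaining basis vectors into
the chain `c 0, b 0, c 1, b 1, …` (with `y₃` linking `c i` to `b i`, and `y₁` linking `b i` to
`c (i + 1)`) spread the root subgroups of the special block to all pairs of indices. The vectors
are handled first, along the fixed covector `A0`; then the covectors, by walking the same chain. -/
lemma elemIn_all {H : Submonoid (Matrix (Idx (j + 1) t) (Idx (j + 1) t) F)} (hH : InvClosed H)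
    {y₁ y₃ : Matrix (Idx (j + 1) t) (Idx (j + 1) t) F} (hy₁ : y₁ ∈ H) (hy₃ : y₃ ∈ H)
    (h10 : ElemIn H (A1 : Idx (j + 1) t) A0) (hc0 : ElemIn H (c 0 : Idx (j + 1) t) A0)
    (h01 : ElemIn H (A0 : Idx (j + 1) t) A1) (h0c : ElemIn H (A0 : Idx (j + 1) t) (c 0))
    (r₁ : Pi.single A0 1 ᵥ* y₁ = Pi.single A0 1)
    (r₃ : Pi.single A0 1 ᵥ* y₃ = Pi.single A0 1)
    {a₁ γ₁ δ₁ a₃ γ₃ δ₃ : F} (hγ₁ : γ₁ ≠ 0) (hγ₃ : γ₃ ≠ 0)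
    (colc : ∀ i : Fin (j + 1), y₃ *ᵥ Pi.single (c i.castSucc) 1
      = Pi.single (b i) 1 + δ₃ • Pi.single (c i.castSucc) 1)
    (colb : ∀ i : Fin (j + 1), y₁ *ᵥ Pi.single (b i) 1
      = γ₁ • Pi.single (c i.succ) 1 + a₁ • Pi.single (b i) 1)
    (colf : ∀ l : Fin t, y₁ *ᵥ Pi.single (c (Fin.succ 0)) 1
      = Pi.single (f l) 1 + Pi.single (b 0) 1 + δ₁ • Pi.single (c (Fin.succ 0)) 1)
    (rowc : ∀ i : Fin (j + 1), Pi.single (c i.castSucc) 1 ᵥ* y₃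
      = γ₃ • Pi.single (b i) 1 + δ₃ • Pi.single (c i.castSucc) 1)
    (rowb : ∀ i : Fin (j + 1), Pi.single (b i) 1 ᵥ* y₁
      = Pi.single (c i.succ) 1 + a₁ • Pi.single (b i) 1)
    (rowf : ∀ l : Fin t, Pi.single (b 0) 1 ᵥ* y₃
      = Pi.single (f l) 1 + Pi.single (c 0) 1 + a₃ • Pi.single (b 0) 1) :
    ∀ i k : Idx (j + 1) t, i ≠ k → ElemIn H i k := by
  -- vectors: everything is reached from `c 0` along the covector `A0`
  have vstep : ∀ y ∈ H, Pi.single A0 1 ᵥ* y = Pi.single A0 1 → ∀ {i k : Idx (j + 1) t} {r s : F},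
      r ≠ 0 → y *ᵥ Pi.single i 1 = r • Pi.single k 1 + s • Pi.single i 1 → i ≠ A0 →
      ElemIn H i A0 → ElemIn H k A0 := by
    intro y hy hr i k r s hr0 hyi hi h
    have h1 : RootIn H (y *ᵥ Pi.single i 1) (Pi.single A0 1) :=
      RootIn.conj hH hy (by rw [hr]; exact h)
    rw [hyi] at h1
    have h2 := h1.add_left (h.smul_left (-s)) (by simp [hi.symm])
    refine RootIn.of_smul_left hr0 ?_
    convert h2 using 1
    module
  have vc : ∀ k : Fin (j + 1 + 1), ElemIn H (c k : Idx (j + 1) t) A0 := by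
    intro k
    induction k using Fin.induction with
    | zero => exact hc0
    | succ i ih =>
      have hb : ElemIn H (b i : Idx (j + 1) t) A0 :=
        vstep y₃ hy₃ r₃ one_ne_zero (by rw [colc, one_smul]) (by simp) ih
      exact vstep y₁ hy₁ r₁ hγ₁ (colb i) (by simp) hb
  have vb : ∀ i : Fin (j + 1), ElemIn H (b i : Idx (j + 1) t) A0 := fun i =>
    vstep y₃ hy₃ r₃ one_ne_zero (by rw [colc, one_smul]) (by simp) (vc i.castSucc)
  have vf : ∀ l : Fin t, ElemIn H (f l : Idx (j + 1) t) A0 := by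
    intro l
    have h1 : RootIn H (y₁ *ᵥ Pi.single (c (Fin.succ 0)) 1) (Pi.single A0 1) :=
      RootIn.conj hH hy₁ (by rw [r₁]; exact vc _)
    rw [colf l] at h1
    have h2 := (h1.add_left ((vc (Fin.succ 0)).smul_left (-δ₁)) (by simp)).add_left
      ((vb 0).smul_left (-1)) (by simp)
    convert h2 using 1
    module
  have vall : ∀ i : Idx (j + 1) t, i ≠ A0 → ElemIn H i A0 := by
    rintro (_ | _ | i | k | l) hi
    exacts [absurd rfl hi, h10, vb i, vc k, vf l]
  -- covectors: everything is reached from `A0`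
  have wA0 : FullCovector H (Pi.single (A0 : Idx (j + 1) t) (1 : F)) := by
    intro v hv
    have hv0 : v A0 = 0 := by simpa using hv
    have hsum : v = ∑ i, v i • Pi.single i (1 : F) := by
      ext k; simp [Finset.sum_apply, Pi.single_apply]
    have : (∑ i, v i • (Pi.single i (1 : F) : Idx (j + 1) t → F)) A0 = 0 ∧
        RootIn H (∑ i, v i • Pi.single i (1 : F)) (Pi.single A0 1) := by
      refine Finset.sum_induction _
        (fun u : Idx (j + 1) t → F => u A0 = 0 ∧ RootIn H u (Pi.single A0 1)) ?_ ?_ ?_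
      · rintro u w ⟨hu, hu'⟩ ⟨hw, hw'⟩
        exact ⟨by simp [hu, hw], hu'.add_left hw' (by simp [hw])⟩
      · exact ⟨rfl, fun x => by simp [H.one_mem]⟩
      · intro i _
        by_cases hi : i = A0
        · subst hi
          rw [hv0, zero_smul]
          exact ⟨rfl, fun x => by simp [H.one_mem]⟩
        · exact ⟨by simp [Ne.symm hi], (vall i hi).smul_left _⟩
    rw [hsum]; exact this.2
  have wstart : ∀ k : Idx (j + 1) t, k ≠ A0 → ElemIn H A0 k →
      FullCovector H (Pi.single k (1 : F)) := by
    intro k hk h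
    have h1 := wA0.vecMul hH (h 1)
    refine wA0.extract hH (r := 1) (s := 1) one_ne_zero (by simp [hk]) ?_
    convert h1 using 1
    rw [vecMul_add, vecMul_one, vecMul_smul, vecMul_vecMulVec]
    simp [add_comm]
  have wc : ∀ k : Fin (j + 1 + 1), FullCovector H (Pi.single (c k : Idx (j + 1) t) (1 : F)) := by
    intro k
    induction k using Fin.induction with
    | zero => exact wstart _ (by simp) h0c
    | succ i ih =>
      have hb : FullCovector H (Pi.single (b i : Idx (j + 1) t) (1 : F)) :=
        ih.extract hH hγ₃ (by simp) (rowc i ▸ ih.vecMul hH hy₃)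
      refine hb.extract hH one_ne_zero (by simp) (s := a₁) ?_
      rw [one_smul]
      exact rowb i ▸ hb.vecMul hH hy₁
  have wb : ∀ i : Fin (j + 1), FullCovector H (Pi.single (b i : Idx (j + 1) t) (1 : F)) := fun i =>
    (wc i.castSucc).extract hH hγ₃ (by simp) (rowc i ▸ (wc i.castSucc).vecMul hH hy₃)
  have wf : ∀ l : Fin t, FullCovector H (Pi.single (f l : Idx (j + 1) t) (1 : F)) := by
    intro l
    have h1 := (wb 0).vecMul hH hy₃
    rw [rowf l] at h1
    have h2 := (wb 0).add_smul hH h1 (a := Pi.single (f l) 1) (by simp) (by simp) (-a₃)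
    refine (wc 0).extract hH one_ne_zero (by simp) (s := 1) ?_
    convert h2 using 1
    module
  have wall : ∀ k : Idx (j + 1) t, FullCovector H (Pi.single k (1 : F)) := by
    rintro (_ | _ | i | k | l)
    exacts [wA0, wstart _ (by simp) h01, wb i, wc k, wf l]
  intro i k hik
  exact wall k _ (by simp [hik.symm])

end Walk

/-! ### Generation of the special linear group by transvections -/

section Transvections

variable {ι F : Type*} [Fintype ι] [DecidableEq ι] [Field F]

open Matrix.SpecialLinearGroup in
/-- The identity `diag(a, a⁻¹) = w(a) w(1)⁻¹` of `SL₂`, where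
`w(a) = (1 + a E₁₂)(1 - a⁻¹ E₂₁)(1 + a E₁₂)`. -/
lemma diag2n_eq {i j : ι} (hij : i ≠ j) {a : F} (ha : a ≠ 0) :
    diag2n hij a ha = transvection hij a * transvection hij.symm (-a⁻¹) * transvection hij a *
      (transvection hij (-1) * transvection hij.symm 1 * transvection hij (-1)) := by
  apply Subtype.ext
  have hdiag : (diagonal (fun k ↦ if k = i then a else if k = j then a⁻¹ else 1) : Matrix ι ι F)
      = 1 + (a - 1) • single i i 1 + (a⁻¹ - 1) • single j j 1 := by
    ext k l
    simp only [diagonal_apply, Matrix.add_apply, Matrix.smul_apply, single_apply, one_apply,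
      smul_eq_mul]
    grind
  have hs : ∀ (p q : ι) (x : F), single p q x = x • single p q (1 : F) := fun p q x => by
    simp [smul_single]
  simp only [Matrix.SpecialLinearGroup.coe_mul, transvection_coe, diag2n_coe, hdiag]
  rw [hs i j a, hs j i (-a⁻¹), hs i j (-1)]
  have m1 : single i j (1 : F) * single i j 1 = 0 := single_mul_single_of_ne _ _ _ _ hij.symm _
  have m2 : single j i (1 : F) * single j i 1 = 0 := single_mul_single_of_ne _ _ _ _ hij _
  have m3 : single i j (1 : F) * single j i 1 = single i i 1 := by simp
  have m4 : single j i (1 : F) * single i j 1 = single j j 1 := by simp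
  have m5 : single i i (1 : F) * single i j 1 = single i j 1 := by simp
  have m6 : single j j (1 : F) * single j i 1 = single j i 1 := by simp
  have m7 : single i i (1 : F) * single j i 1 = 0 := single_mul_single_of_ne _ _ _ _ hij _
  have m8 : single j j (1 : F) * single i j 1 = 0 := single_mul_single_of_ne _ _ _ _ hij.symm _
  have m9 : single i j (1 : F) * single j j 1 = single i j 1 := by simp
  have m10 : single j i (1 : F) * single i i 1 = single j i 1 := by simp
  have m11 : single i i (1 : F) * single i i 1 = single i i 1 := by simp
  have m12 : single j j (1 : F) * single j j 1 = single j j 1 := by simp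
  have m13 : single i i (1 : F) * single j j 1 = 0 := single_mul_single_of_ne _ _ _ _ hij _
  have m14 : single j j (1 : F) * single i i 1 = 0 := single_mul_single_of_ne _ _ _ _ hij.symm _
  have m15 : single i j (1 : F) * single i i 1 = 0 := single_mul_single_of_ne _ _ _ _ hij.symm _
  have m16 : single j i (1 : F) * single j j 1 = 0 := single_mul_single_of_ne _ _ _ _ hij _
  simp only [mul_add, add_mul, mul_one, one_mul, smul_mul_assoc, mul_smul_comm, m1, m2,
    m3, m4, m5, m6, m7, m8, m9, m10, m11, m12, m13, m14, m15, m16, smul_zero, add_zero]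
  match_scalars <;> field_simp <;> ring

open Matrix.SpecialLinearGroup in
/-- `SL` over a field is generated by the elementary transvections. -/
lemma eq_top_of_transvection [Nontrivial ι] (G : Subgroup (Matrix.SpecialLinearGroup ι F))
    (h : ∀ i j (hij : i ≠ j) (x : F), transvection hij x ∈ G) : G = ⊤ := by
  rw [eq_top_iff]
  intro M _
  refine diagonal_transvection_induction' (· ∈ G) M ?_ (fun i j hij a => h i j hij a)
    (fun _ _ => G.mul_mem)
  intro i j hij a ha
  rw [diag2n_eq hij ha]
  exact G.mul_mem (G.mul_mem (G.mul_mem (h _ _ _ _) (h _ _ _ _)) (h _ _ _ _))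
    (G.mul_mem (G.mul_mem (h _ _ _ _) (h _ _ _ _)) (h _ _ _ _))

end Transvections

/-! ### Polynomial relations and the three-dimensional block -/

section Blocks

variable {F : Type*} [Field F]

/-- `M` is annihilated by `T² - τ T + 1`. -/
def QuadRel {A : Type*} [Ring A] [Algebra F A] (τ : F) (M : A) : Prop :=
  M * M - τ • M + 1 = 0

/-- `M` is annihilated by `(T - 1)(T² - τ T + 1)`. -/
def CubicRel {A : Type*} [Ring A] [Algebra F A] (τ : F) (M : A) : Prop :=
  (M - 1) * (M * M - τ • M + 1) = 0

/-- The order of `M` divides `m`, because `(T - 1)(T - ζ)(T - ζ⁻¹)` has three distinct roots and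
hence divides `T ^ m - 1`; this is where `m ≥ 3` is needed. -/
lemma CubicRel.pow_eq_one {A : Type*} [Ring A] [Algebra F A] {ζ : F} {m : ℕ} (hm : 3 ≤ m)
    (hζ : IsPrimitiveRoot ζ m) {M : A} (h : CubicRel (ζ + ζ⁻¹) M) : M ^ m = 1 := by
  have hζ0 : ζ ≠ 0 := hζ.ne_zero (by omega)
  have h1 : (1 : F) ≠ ζ := fun h => by
    have := hζ.pow_ne_one_of_pos_of_lt (l := 1) (by omega) (by omega); simp [← h] at this
  have h2 : (1 : F) ≠ ζ⁻¹ := fun h => h1 (by rw [← inv_inv ζ, ← h, inv_one])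
  have h3 : ζ ≠ ζ⁻¹ := fun h => by
    have h' := hζ.pow_ne_one_of_pos_of_lt (l := 2) (by omega) (by omega)
    apply h'
    rw [pow_two]; nth_rw 2 [h]; exact mul_inv_cancel₀ hζ0
  open Polynomial in
  have hd : ((X - C 1) * (X - C ζ)) * (X - C ζ⁻¹) ∣ (X ^ m - 1 : F[X]) := by
    refine IsCoprime.mul_dvd ?_ (IsCoprime.mul_dvd ?_ ?_ ?_) ?_
    · exact IsCoprime.mul_left (isCoprime_X_sub_C_of_isUnit_sub (sub_ne_zero.mpr h2).isUnit)
        (isCoprime_X_sub_C_of_isUnit_sub (sub_ne_zero.mpr h3).isUnit)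
    · exact isCoprime_X_sub_C_of_isUnit_sub (sub_ne_zero.mpr h1).isUnit
    · rw [dvd_iff_isRoot]; simp
    · rw [dvd_iff_isRoot]; simp [hζ.pow_eq_one]
    · rw [dvd_iff_isRoot]; simp [hζ.pow_eq_one]
  obtain ⟨r, hr⟩ := hd
  open Polynomial in
  have e : ((X - C 1) * (X - C ζ)) * (X - C ζ⁻¹) = (X - 1) * (X * X - C (ζ + ζ⁻¹) * X + 1) := by
    have : (C ζ : F[X]) * C ζ⁻¹ = 1 := by rw [← C_mul, mul_inv_cancel₀ hζ0, C_1]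
    simp only [C_1, C_add]
    linear_combination (X - 1) * this
  rw [e] at hr
  have := congrArg (Polynomial.aeval M) hr
  simp only [map_sub, map_pow, map_mul, map_add, map_one, Polynomial.aeval_X,
    Polynomial.aeval_C] at this
  have h0 : (M - 1) * (M * M - (algebraMap F A ζ + algebraMap F A ζ⁻¹) * M + 1) = 0 := by
    rw [← map_add, ← Algebra.smul_def]; exact h
  rw [h0, zero_mul] at this
  exact sub_eq_zero.mp this

lemma quad_of_fin_two {τ : F} {M : Matrix (Fin 2) (Fin 2) F} (hdet : M.det = 1)
    (htr : M 0 0 + M 1 1 = τ) : QuadRel τ M := by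
  rw [det_fin_two] at hdet
  subst htr
  unfold QuadRel
  ext i k
  fin_cases i <;> fin_cases k <;> simp [mul_apply, Fin.sum_univ_two] <;>
    first | linear_combination (-1 : F) * hdet | ring

/-- Cayley–Hamilton for a `3 × 3` matrix with characteristic polynomial
`(T - 1)(T² - τ T + 1)`. -/
lemma cubic_of_fin_three {τ : F} {M : Matrix (Fin 3) (Fin 3) F} (hdet : M.det = 1)
    (htr : M 0 0 + M 1 1 + M 2 2 = 1 + τ)
    (hs : M 0 0 * M 1 1 - M 0 1 * M 1 0 + (M 0 0 * M 2 2 - M 0 2 * M 2 0)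
      + (M 1 1 * M 2 2 - M 1 2 * M 2 1) = 1 + τ) : CubicRel τ M := by
  have hCH : M * M * M - (M 0 0 + M 1 1 + M 2 2) • (M * M)
      + (M 0 0 * M 1 1 - M 0 1 * M 1 0 + (M 0 0 * M 2 2 - M 0 2 * M 2 0)
      + (M 1 1 * M 2 2 - M 1 2 * M 2 1)) • M - M.det • 1 = 0 := by
    rw [det_fin_three]
    ext i k
    fin_cases i <;> fin_cases k <;> simp [mul_apply, Fin.sum_univ_three] <;> ring
  rw [hdet, htr, hs] at hCH
  unfold CubicRel
  rw [← hCH]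
  simp only [sub_mul, mul_add, mul_sub, mul_one, one_mul, mul_smul_comm, mul_assoc]
  module

/-- The `3 × 3` block of the product: a Jordan block of size two and its complement. -/
def specialP (l : F) : Matrix (Fin 3) (Fin 3) F := !![l, 1, 0; 0, l, 0; 0, 0, (l ^ 2)⁻¹]

/-- The `3 × 3` block of a generator. Its first row fixes the covector of the first basis vector,
and its first column sends that vector to the sum of the first and third basis vectors. -/
def specialX (a w y e : F) : Matrix (Fin 3) (Fin 3) F := !![1, 0, 0; 0, a, w; 1, y, e]

/-- The block `specialP l` factors as `specialX a w y e * Z` with both characteristic polynomials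
prescribed: their coefficients determine `e`, `w` and `a`, and the determinant determines `y`. The value of the
second characteristic polynomial at `l` is, up to a unit, `-w`, whence the hypothesis `hp`. -/
lemma special_exists {l τ₁ τ₂ : F} (hl0 : l ≠ 0) (hl3 : l ^ 3 ≠ 1)
    (hp : (l - 1) * (l ^ 2 - τ₂ * l + 1) ≠ 0) :
    ∃ (a w y e : F) (Z : Matrix (Fin 3) (Fin 3) F), w ≠ 0 ∧ a * e - w * y = 1 ∧
      (specialX a w y e).det = 1 ∧ Z.det = 1 ∧ CubicRel τ₁ (specialX a w y e) ∧ CubicRel τ₂ Z ∧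
      specialX a w y e * Z = specialP l := by
  have hl3' : l ^ 3 - 1 ≠ 0 := sub_ne_zero.mpr hl3
  obtain ⟨e, he⟩ : ∃ e, e * (l ^ 3 - 1) = (1 + τ₂) * l - (1 + τ₁) :=
    ⟨_, div_mul_cancel₀ _ hl3'⟩
  obtain ⟨w, hw⟩ : ∃ w, w * l ^ 2 = - ((l - 1) * (l ^ 2 - τ₂ * l + 1)) :=
    ⟨_, div_mul_cancel₀ _ (pow_ne_zero 2 hl0)⟩
  have hw0 : w ≠ 0 := by
    rintro rfl
    apply hp
    linear_combination hw
  obtain ⟨a, ha⟩ : ∃ a, a + e = τ₁ := ⟨τ₁ - e, by ring⟩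
  obtain ⟨y, hy⟩ : ∃ y, y * w = a * e - 1 := ⟨_, div_mul_cancel₀ _ hw0⟩
  obtain ⟨k, hk⟩ : ∃ k, k * l = 1 := ⟨l⁻¹, inv_mul_cancel₀ hl0⟩
  have hk2 : (l ^ 2)⁻¹ = k ^ 2 := by
    rw [eq_comm]; apply eq_inv_of_mul_eq_one_left; rw [← mul_pow, hk, one_pow]
  have hae : a * e - w * y = 1 := by linear_combination -hy
  have hX : (specialX a w y e).det = 1 := by
    rw [specialX, det_fin_three]; simp; linear_combination hae
  have hw' : w = -(l - 1) * (1 - τ₂ * k + k ^ 2) := by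
    linear_combination k ^ 2 * hw + (-w * (k * l + 1) - (l-1) * (k * l + 1) + (l - 1) * τ₂ * k) * hk
  have hev : e * (l - k ^ 2) = (1 + τ₂) * k - (1 + τ₁) * k ^ 2 := by
    linear_combination k ^ 2 * he + (-e * l * (k * l + 1) + (1 + τ₂) * k) * hk
  let Z : Matrix (Fin 3) (Fin 3) F := !![l, 1, 0; w * l, w + l * e, -w * k ^ 2;
    -a * l, -a - l * y, a * k ^ 2]
  refine ⟨a, w, y, e, Z, hw0, hae, hX, ?_, ?_, ?_, ?_⟩
  · rw [det_fin_three]; simp [Z]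
    linear_combination l ^ 2 * k ^ 2 * hae + (k * l + 1) * hk
  · refine cubic_of_fin_three hX ?_ ?_
    · simp [specialX]; linear_combination ha
    · simp [specialX]; linear_combination ha + hae
  · refine cubic_of_fin_three ?_ ?_ ?_
    · rw [det_fin_three]; simp [Z]
      linear_combination l ^ 2 * k ^ 2 * hae + (k * l + 1) * hk
    · simp [Z]
      grind
    · simp [Z]
      clear hX hk2 hw' hy hw0 hw he hp hl3 hl3' hl0
      grind
  · rw [specialP, hk2]
    ext i k
    fin_cases i <;> fin_cases k <;> simp [specialX, Z, mul_apply, Fin.sum_univ_three]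
    all_goals grind

end Blocks

/-! ### Two-dimensional blocks and the extra fixed vector -/

section Pairs

variable {F : Type*} [Field F]

/-- Two numbers with the same sum `x + x⁻¹` agree up to inversion. -/
lemma eq_or_eq_inv_of_add_inv {u v : F} (hu : u ≠ 0) (hv : v ≠ 0) (h : u + u⁻¹ = v + v⁻¹) :
    u = v ∨ u = v⁻¹ := by
  have : (u - v) * (u - v⁻¹) = 0 := by
    have h1 := mul_inv_cancel₀ hu
    have h2 := mul_inv_cancel₀ hv
    linear_combination u * h - h1 + h2
  rcases mul_eq_zero.mp this with h | h
  · exact Or.inl (sub_eq_zero.mp h)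
  · exact Or.inr (sub_eq_zero.mp h)

/-- The matrix `diag(ω, ω⁻¹)` factors into two matrices of `SL₂` with prescribed traces, the first
having both off-diagonal entries nonzero. The lower entry `γ` could vanish only if `ω` were a
product of an eigenvalue of the first factor and one of the second, which `hω` excludes. -/
lemma pair_exists {ω ζ₁ ζ₂ : F} {m₁ m₂ : ℕ} (hω0 : ω ≠ 0) (hω2 : ω ^ 2 ≠ 1) (hζ₁0 : ζ₁ ≠ 0)
    (hζ₂0 : ζ₂ ≠ 0) (hζ₁ : ζ₁ ^ m₁ = 1) (hζ₂ : ζ₂ ^ m₂ = 1) (hω : ω ^ (m₁ * m₂) ≠ 1) :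
    ∃ (a γ δ : F) (Z : Matrix (Fin 2) (Fin 2) F), γ ≠ 0 ∧ (!![a, 1; γ, δ]).det = 1 ∧ Z.det = 1 ∧
      QuadRel (ζ₁ + ζ₁⁻¹) !![a, 1; γ, δ] ∧ QuadRel (ζ₂ + ζ₂⁻¹) Z ∧
      !![a, 1; γ, δ] * Z = diagonal ![ω, ω⁻¹] := by
  obtain ⟨ψ, hψ⟩ : ∃ ψ, ψ = ω⁻¹ := ⟨_, rfl⟩
  obtain ⟨ξ₁, hξ₁⟩ : ∃ ξ, ξ = ζ₁⁻¹ := ⟨_, rfl⟩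
  obtain ⟨ξ₂, hξ₂⟩ : ∃ ξ, ξ = ζ₂⁻¹ := ⟨_, rfl⟩
  rw [← hψ, ← hξ₁, ← hξ₂]
  have hψω : ψ * ω = 1 := by rw [hψ, inv_mul_cancel₀ hω0]
  have h1 : ξ₁ * ζ₁ = 1 := by rw [hξ₁, inv_mul_cancel₀ hζ₁0]
  have hd : ψ - ω ≠ 0 := fun h => hω2 (by
    rw [sub_eq_zero] at h; rw [pow_two]; nth_rw 1 [← h]; exact hψω)
  obtain ⟨a, ha⟩ : ∃ a, a * (ψ - ω) = (ζ₂ + ξ₂) - (ζ₁ + ξ₁) * ω := ⟨_, div_mul_cancel₀ _ hd⟩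
  -- the critical case: `a` is an eigenvalue of the first matrix only if `ω` is a product of
  -- eigenvalues
  have hbad : ∀ z : F, z ≠ 0 → z ^ m₁ = 1 → z * ψ + z⁻¹ * ω = ζ₂ + ξ₂ → False := by
    intro z hz hz1 hzz
    have hu : z * ψ + (z * ψ)⁻¹ = ζ₂ + ζ₂⁻¹ := by
      rw [mul_inv, hψ, inv_inv, ← hξ₂, ← hψ]; exact hzz
    have hz0 : z * ψ ≠ 0 := mul_ne_zero hz (hψ ▸ inv_ne_zero hω0)
    have hzψ : (z * ψ) ^ m₂ = 1 := by
      rcases eq_or_eq_inv_of_add_inv hz0 hζ₂0 hu with h | h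
      · rw [h, hζ₂]
      · rw [h, inv_pow, hζ₂, inv_one]
    apply hω
    have h5 : (z * ψ * ω) ^ (m₁ * m₂) = ω ^ (m₁ * m₂) := by
      rw [mul_pow, mul_comm m₁ m₂, pow_mul (z * ψ), hzψ, one_pow, one_mul]
    rw [mul_assoc, hψω, mul_one, pow_mul, hz1, one_pow] at h5
    exact h5.symm
  obtain ⟨γ, hγ⟩ : ∃ γ, γ = a * (ζ₁ + ξ₁ - a) - 1 := ⟨_, rfl⟩
  have hγ0 : γ ≠ 0 := by
    intro h0
    have : (a - ζ₁) * (a - ξ₁) = 0 := by linear_combination h1 + hγ - h0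
    rcases mul_eq_zero.mp this with h | h
    · refine hbad ζ₁ hζ₁0 hζ₁ ?_
      rw [← hξ₁]; rw [sub_eq_zero.mp h] at ha; linear_combination ha
    · refine hbad ξ₁ (hξ₁ ▸ inv_ne_zero hζ₁0) (by rw [hξ₁, inv_pow, hζ₁, inv_one]) ?_
      rw [hξ₁, inv_inv, ← hξ₁]; rw [sub_eq_zero.mp h] at ha; linear_combination ha
  have hdet : (!![a, 1; γ, ζ₁ + ξ₁ - a]).det = 1 := by
    rw [det_fin_two]; simp; linear_combination -hγ
  have hZ : (!![(ζ₁ + ξ₁ - a) * ω, -ψ; -γ * ω, a * ψ]).det = 1 := by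
    rw [det_fin_two]; simp
    linear_combination (-ω * ψ) * hγ + hψω
  refine ⟨a, γ, ζ₁ + ξ₁ - a, _, hγ0, hdet, hZ, quad_of_fin_two hdet (by simp),
    quad_of_fin_two hZ ?_, ?_⟩
  · simp; linear_combination ha
  · ext i k
    fin_cases i <;> fin_cases k <;> simp [mul_apply, Fin.sum_univ_two]
    · linear_combination (-ω) * hγ
    · ring
    · linear_combination (-ψ) * hγ

variable {n k : Type*} [Fintype n] [DecidableEq n] [Fintype k] [DecidableEq k]

lemma lower_cubic {τ : F} {C : Matrix n n F} (hC : QuadRel τ C) (Γ : Matrix k n F) :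
    CubicRel τ (fromBlocks C 0 Γ (1 : Matrix k k F)) := by
  unfold CubicRel
  unfold QuadRel at hC
  rw [← fromBlocks_one, fromBlocks_multiply, fromBlocks_smul, sub_eq_add_neg, sub_eq_add_neg,
    fromBlocks_neg, fromBlocks_neg, fromBlocks_add, fromBlocks_add, fromBlocks_add,
    fromBlocks_multiply]
  simp only [Matrix.mul_zero, Matrix.zero_mul, add_zero, ← sub_eq_add_neg, hC, smul_zero,
    sub_self, fromBlocks_zero, neg_zero, zero_add]

lemma upper_cubic {τ : F} {C : Matrix n n F} (hC : QuadRel τ C) (Δ : Matrix n k F) :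
    CubicRel τ (fromBlocks C Δ 0 (1 : Matrix k k F)) := by
  unfold CubicRel
  unfold QuadRel at hC
  -- with the two factors in the other order, the block product vanishes entry by entry
  have hcomm : ∀ M : Matrix (n ⊕ k) (n ⊕ k) F,
      (M - 1) * (M * M - τ • M + 1) = (M * M - τ • M + 1) * (M - 1) := by
    intro M
    simp only [sub_mul, mul_sub, mul_add, add_mul, smul_mul_assoc, mul_smul_comm, mul_one, one_mul,
      mul_assoc]
    module
  rw [hcomm, ← fromBlocks_one, fromBlocks_multiply, fromBlocks_smul, sub_eq_add_neg,
    sub_eq_add_neg, fromBlocks_neg, fromBlocks_neg, fromBlocks_add, fromBlocks_add, fromBlocks_add,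
    fromBlocks_multiply]
  simp only [Matrix.mul_zero, Matrix.zero_mul, add_zero, ← sub_eq_add_neg, hC, smul_zero,
    sub_self, fromBlocks_zero, neg_zero, zero_add]

/-- A factorisation `C * Z = D` with quadratic relations extends by fixed vectors: the glue `Γ` of
the first factor is compensated in the second, and the relations become cubic. -/
lemma lower_exists {τ₁ τ₂ : F} {C Z D : Matrix n n F} (hC : QuadRel τ₁ C) (hZ : QuadRel τ₂ Z)
    (hdC : C.det = 1) (hdZ : Z.det = 1) (hCZ : C * Z = D) (Γ : Matrix k n F) :
    ∃ R' : Matrix (n ⊕ k) (n ⊕ k) F, (fromBlocks C 0 Γ (1 : Matrix k k F)).det = 1 ∧ R'.det = 1 ∧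
      CubicRel τ₁ (fromBlocks C 0 Γ (1 : Matrix k k F)) ∧ CubicRel τ₂ R' ∧
      fromBlocks C 0 Γ (1 : Matrix k k F) * R' = fromBlocks D 0 0 1 := by
  refine ⟨fromBlocks Z 0 (-(Γ * Z)) 1, by simp [hdC], by simp [hdZ], lower_cubic hC _,
    lower_cubic hZ _, ?_⟩
  simp [fromBlocks_multiply, hCZ]

/-- The counterpart of `lower_exists` with the glue above the diagonal. -/
lemma upper_exists {τ₁ τ₂ : F} {C Z D : Matrix n n F} (hC : QuadRel τ₁ C) (hZ : QuadRel τ₂ Z)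
    (hdC : C.det = 1) (hdZ : Z.det = 1) (hCZ : C * Z = D) (Δ : Matrix n k F) :
    ∃ R' : Matrix (n ⊕ k) (n ⊕ k) F, (fromBlocks C Δ 0 (1 : Matrix k k F)).det = 1 ∧ R'.det = 1 ∧
      CubicRel τ₁ (fromBlocks C Δ 0 (1 : Matrix k k F)) ∧ CubicRel τ₂ R' ∧
      fromBlocks C Δ 0 (1 : Matrix k k F) * R' = fromBlocks D 0 0 1 := by
  refine ⟨fromBlocks Z (-(C⁻¹ * Δ)) 0 1, by simp [hdC], by simp [hdZ], upper_cubic hC _,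
    upper_cubic hZ _, ?_⟩
  have : C * (C⁻¹ * Δ) = Δ := Matrix.mul_nonsing_inv_cancel_left _ _ (by simp [hdC])
  simp [fromBlocks_multiply, hCZ, this]

lemma blockDiagonal_quad {τ : F} {C : Matrix n n F} (hC : QuadRel τ C) :
    QuadRel τ (blockDiagonal fun _ : k => C) := by
  unfold QuadRel at *
  have h := congrArg (fun M => blockDiagonal (fun _ : k => M)) hC
  rw [← blockDiagonal_mul, ← blockDiagonal_smul, ← blockDiagonal_sub, ← blockDiagonal_one,
    ← blockDiagonal_add]
  refine Eq.trans h ?_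
  exact blockDiagonal_zero

end Pairs

/-! ### Assembling the blocks in two ways -/

section Assembly

open Idx

variable {F : Type*} [Field F] {j t : ℕ}

/-- The index set of the block decomposition: a special block of size three, `j` blocks of size
two, and `t` blocks of size one. -/
abbrev BlockIdx (j t : ℕ) := Fin 3 ⊕ ((Fin 2 × Fin j) ⊕ Fin t)

/-- The block decomposition of the basis in which `c p` belongs to the special block and the
remaining `c k` are matched with the `b i` in increasing order. -/
def blockFun (p : Fin (j + 1)) : BlockIdx j t → Idx j t
  | .inl 0 => A0
  | .inl 1 => A1
  | .inl 2 => c p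
  | .inr (.inl (0, i)) => b i
  | .inr (.inl (1, i)) => c (p.succAbove i)
  | .inr (.inr i) => f i

lemma blockFun_bijective (p : Fin (j + 1)) : Function.Bijective (blockFun (t := t) p) := by
  constructor
  · rintro (x | ⟨x, i⟩ | i) (y | ⟨y, k⟩ | k) h <;> try fin_cases x <;> try fin_cases y
    all_goals try fin_cases y
    all_goals simp_all [blockFun, Fin.succAbove_ne, (Fin.succAbove_ne _ _).symm]
  · rintro (_ | _ | i | k | i)
    · exact ⟨.inl 0, rfl⟩
    · exact ⟨.inl 1, rfl⟩
    · exact ⟨.inr (.inl (0, i)), rfl⟩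
    · by_cases h : k = p
      · exact ⟨.inl 2, by rw [h]; rfl⟩
      · obtain ⟨i, rfl⟩ := Fin.exists_succAbove_eq h
        exact ⟨.inr (.inl (1, i)), rfl⟩
    · exact ⟨.inr (.inr i), rfl⟩

/-- The bijection `blockFun p` as an equivalence. -/
noncomputable def blockEquiv (p : Fin (j + 1)) : BlockIdx j t ≃ Idx j t :=
  Equiv.ofBijective _ (blockFun_bijective p)

lemma card_idx : Fintype.card (Idx j t) = 3 + 2 * j + t := by
  rw [← Fintype.card_congr (blockEquiv (t := t) (0 : Fin (j + 1)))]
  simp; ring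

/-- The eigenvalues of the product matrix `prodMat l`. -/
def weight (l : F) : Idx j t → F
  | A0 => l
  | A1 => l
  | b _ => l ^ 2
  | c _ => (l ^ 2)⁻¹
  | f _ => 1

/-- The common product `g₁ g₂ = (g₃ g₄)⁻¹`: diagonal up to one Jordan block. -/
def prodMat (l : F) : Matrix (Idx j t) (Idx j t) F :=
  diagonal (weight l) + single A0 A1 1

lemma prodMat_submatrix (l : F) (p : Fin (j + 1)) :
    (prodMat l : Matrix (Idx j t) (Idx j t) F).submatrix (blockEquiv p) (blockEquiv p) =
      fromBlocks (specialP l) 0 0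
        (fromBlocks (blockDiagonal fun _ => diagonal ![l ^ 2, (l ^ 2)⁻¹]) 0 0 1) := by
  have hs : (single A0 A1 1 : Matrix (Idx j t) (Idx j t) F).submatrix
      (blockEquiv p) (blockEquiv p) = single (.inl 0) (.inl 1) 1 := by
    have h0 : (blockEquiv (t := t) p).symm A0 = .inl 0 := by
      rw [Equiv.symm_apply_eq]; rfl
    have h1 : (blockEquiv (t := t) p).symm A1 = .inl 1 := by
      rw [Equiv.symm_apply_eq]; rfl
    rw [submatrix_single_equiv, h0, h1]
  have hd : (weight l : Idx j t → F) ∘ blockEquiv p =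
      Sum.elim ![l, l, (l ^ 2)⁻¹] (Sum.elim (fun q => ![l ^ 2, (l ^ 2)⁻¹] q.1) 1) := by
    ext x
    rcases x with x | ⟨x, i⟩ | i <;> try fin_cases x
    all_goals rfl
  rw [prodMat, submatrix_add, Pi.add_apply, Pi.add_apply, submatrix_diagonal_equiv, hd, hs]
  have h3 : specialP l = diagonal ![l, l, (l ^ 2)⁻¹] + single 0 1 1 := by
    ext i k
    fin_cases i <;> fin_cases k <;> simp [specialP]
  have h1 : (1 : Matrix (Fin t) (Fin t) F) = diagonal 1 := by simp
  rw [h3, blockDiagonal_diagonal, h1, fromBlocks_diagonal]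
  ext x y
  rcases x with x | x <;> rcases y with y | y <;> simp [diagonal_apply, single_apply]

/-- The matrix on `Idx j t` with special block `X` and complementary block `R`, with respect to
the block decomposition given by `p`. -/
noncomputable def blockMat (p : Fin (j + 1)) (X : Matrix (Fin 3) (Fin 3) F)
    (R : Matrix ((Fin 2 × Fin j) ⊕ Fin t) ((Fin 2 × Fin j) ⊕ Fin t) F) :
    Matrix (Idx j t) (Idx j t) F :=
  (fromBlocks X 0 0 R).submatrix (blockEquiv p).symm (blockEquiv p).symm

lemma blockMat_apply (p : Fin (j + 1)) (X : Matrix (Fin 3) (Fin 3) F)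
    (R : Matrix ((Fin 2 × Fin j) ⊕ Fin t) ((Fin 2 × Fin j) ⊕ Fin t) F) (u v : BlockIdx j t) :
    blockMat p X R (blockFun p u) (blockFun p v) = fromBlocks X 0 0 R u v := by
  have h : ∀ u, (blockEquiv (t := t) p).symm (blockFun p u) = u := fun u =>
    (blockEquiv (t := t) p).symm_apply_apply u
  rw [blockMat, submatrix_apply, h, h]

lemma blockMat_det (p : Fin (j + 1)) {X : Matrix (Fin 3) (Fin 3) F}
    {R : Matrix ((Fin 2 × Fin j) ⊕ Fin t) ((Fin 2 × Fin j) ⊕ Fin t) F}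
    (hX : X.det = 1) (hR : R.det = 1) : (blockMat p X R).det = 1 := by
  rw [blockMat, det_submatrix_equiv_self, det_fromBlocks_zero₂₁, hX, hR, one_mul]

lemma blockMat_pow (p : Fin (j + 1)) {X : Matrix (Fin 3) (Fin 3) F}
    {R : Matrix ((Fin 2 × Fin j) ⊕ Fin t) ((Fin 2 × Fin j) ⊕ Fin t) F} {k : ℕ}
    (hX : X ^ k = 1) (hR : R ^ k = 1) : blockMat p X R ^ k = 1 := by
  have h : blockMat p X R = reindexAlgEquiv F F (blockEquiv p) (fromBlocks X 0 0 R) := rfl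
  rw [h, ← map_pow, fromBlocks_diagonal_pow, hX, hR, fromBlocks_one, map_one]

lemma blockMat_mul (p : Fin (j + 1)) {X X' : Matrix (Fin 3) (Fin 3) F} {l : F}
    {R R' : Matrix ((Fin 2 × Fin j) ⊕ Fin t) ((Fin 2 × Fin j) ⊕ Fin t) F}
    (hX : X * X' = specialP l)
    (hR : R * R' = fromBlocks (blockDiagonal fun _ => diagonal ![l ^ 2, (l ^ 2)⁻¹]) 0 0 1) :
    blockMat p X R * blockMat p X' R' = prodMat l := by
  rw [blockMat, blockMat, submatrix_mul_equiv, fromBlocks_multiply]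
  simp only [Matrix.mul_zero, Matrix.zero_mul, add_zero, zero_add, hX, hR]
  rw [← prodMat_submatrix l p]
  ext; simp

lemma blockMat_col (p : Fin (j + 1)) (X : Matrix (Fin 3) (Fin 3) F)
    (R : Matrix ((Fin 2 × Fin j) ⊕ Fin t) ((Fin 2 × Fin j) ⊕ Fin t) F) (v : BlockIdx j t)
    {x : Idx j t → F} (h : ∀ u, fromBlocks X 0 0 R u v = x (blockFun p u)) :
    blockMat p X R *ᵥ Pi.single (blockFun p v) 1 = x := by
  ext i
  obtain ⟨u, rfl⟩ := (blockFun_bijective p).2 i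
  rw [mulVec_single_one, col_apply, blockMat_apply, h]

lemma blockMat_row (p : Fin (j + 1)) (X : Matrix (Fin 3) (Fin 3) F)
    (R : Matrix ((Fin 2 × Fin j) ⊕ Fin t) ((Fin 2 × Fin j) ⊕ Fin t) F) (v : BlockIdx j t)
    {x : Idx j t → F} (h : ∀ u, fromBlocks X 0 0 R v u = x (blockFun p u)) :
    Pi.single (blockFun p v) 1 ᵥ* blockMat p X R = x := by
  ext i
  obtain ⟨u, rfl⟩ := (blockFun_bijective p).2 i
  rw [single_one_vecMul, row_apply, blockMat_apply, h]

/-- The glue of the first generator: when `p = 0`, its image of `c 1` gets a component along the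
fixed vector. -/
def lowerGlue : Matrix (Fin t) (Fin 2 × Fin (j + 1)) F := of fun _ r => if r = (1, 0) then 1 else 0

/-- The glue of the inverse of the fourth generator: its row `b 0` gets an entry in the column of
the fixed vector. -/
def upperGlue : Matrix (Fin 2 × Fin (j + 1)) (Fin t) F := of fun r _ => if r = (0, 0) then 1 else 0

lemma prodMat_pow (l : F) (k : ℕ) :
    (prodMat l : Matrix (Idx j t) (Idx j t) F) ^ (k + 1) =
      diagonal (weight l ^ (k + 1)) + single A0 A1 ((k + 1 : F) * l ^ k) := by
  induction k with
  | zero => simp [prodMat]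
  | succ k ih =>
    have h1 : (diagonal (weight l ^ (k + 1)) : Matrix (Idx j t) (Idx j t) F) * single A0 A1 1 =
        single A0 A1 (l ^ (k + 1)) := by
      ext u v
      rw [diagonal_mul]
      by_cases h : A0 = u
      · subst h; simp [single_apply, weight]
      · simp [h]
    have h2 : single A0 A1 ((k + 1 : F) * l ^ k) * diagonal (weight l) =
        (single A0 A1 ((k + 1 : F) * l ^ k * l) : Matrix (Idx j t) (Idx j t) F) := by
      ext u v
      rw [mul_diagonal]
      by_cases h : A1 = v
      · subst h; by_cases h : A0 = u <;> simp [weight, h]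
      · simp [h]
    have h3 : single A0 A1 ((k + 1 : F) * l ^ k) * single A0 A1 1 =
        (0 : Matrix (Idx j t) (Idx j t) F) := by simp
    rw [pow_succ, ih, prodMat, add_mul, mul_add, mul_add, diagonal_mul_diagonal,
      h3, add_zero, h1, h2, add_assoc, ← single_add]
    congr 2
    · ext i; simp [pow_succ]
    · push_cast; ring

/-- A group containing the product matrix and the two block matrices with `p = 0` and `p = last`
contains all elementary root subgroups. The power `P ^ q` of the product matrix `P` is its
diagonal part, as `q = 0` in `F`, so `P` splits into a torus element and a transvection. The first
block matrix links `b i` to `c (i + 1)`, the second links `b i` to `c i`. -/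
lemma block_walk [Fintype F] (hq : 4 < Fintype.card F) {l : F} (hl0 : l ≠ 0) (hl3 : l ^ 3 ≠ 1)
    (hl : Fintype.card F ≤ 3 * orderOf (l ^ 3)⁻¹ + 1) (ht : t ≤ 1)
    {a₁ γ₁ δ₁ a₃ γ₃ δ₃ w e y a w' e' y' a' : F} (hw : w ≠ 0) (hdet : a * e - w * y = 1)
    (hγ₁ : γ₁ ≠ 0) (hγ₃ : γ₃ ≠ 0)
    {H : Submonoid (Matrix (Idx (j + 1) t) (Idx (j + 1) t) F)} (hH : InvClosed H)
    (hP : prodMat l ∈ H)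
    (h₁ : blockMat 0 (specialX a w y e)
      (fromBlocks (blockDiagonal fun _ => !![a₁, 1; γ₁, δ₁]) 0 lowerGlue 1) ∈ H)
    (h₃ : blockMat (Fin.last _) (specialX a' w' y' e')
      (fromBlocks (blockDiagonal fun _ => !![a₃, 1; γ₃, δ₃]) upperGlue 0 1) ∈ H) :
    ∀ i k : Idx (j + 1) t, i ≠ k → ElemIn H i k := by
  have hq1 : Fintype.card F - 1 + 1 = Fintype.card F := by omega
  have hcast : ((Fintype.card F - 1 : ℕ) : F) + 1 = 0 := by
    have := congrArg (Nat.cast : ℕ → F) hq1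
    push_cast at this
    rw [this, FiniteField.cast_card_eq_zero]
  have hw1 : (weight l : Idx (j + 1) t → F) ^ Fintype.card F = weight l := by
    ext i; rw [Pi.pow_apply, FiniteField.pow_card]
  have hD : diagonal (weight l : Idx (j + 1) t → F) ∈ H := by
    have h := H.pow_mem hP (Fintype.card F)
    rwa [← hq1, prodMat_pow, hcast, hq1, hw1, zero_mul, single_zero, add_zero] at h
  obtain ⟨Dinv, hDinv, hDi⟩ := hH _ hD
  have hx : 1 + l⁻¹ • vecMulVec (Pi.single A0 1) (Pi.single A1 1) ∈ H := by
    have h := H.mul_mem hP hDinv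
    have h0 : prodMat l = (1 + l⁻¹ • vecMulVec (Pi.single A0 1) (Pi.single A1 1)) *
        diagonal (weight l : Idx (j + 1) t → F) := by
      rw [add_mul, one_mul, smul_mul, vecMulVec_mul, single_vecMul_diagonal', prodMat,
        single_eq_single_vecMulVec_single, vecMulVec_smul, smul_smul]
      simp [weight, hl0]
    rwa [h0, mul_assoc, hDi, mul_one] at h
  obtain ⟨e10, ec0, e01, e0c⟩ := special_block (i₁ := (A0 : Idx (j + 1) t)) (i₂ := A1)
    (i₃ := c 0) hH hq hl0 hl3 hl (by simp) (by simp) (by simp) hD rfl rfl rfl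
    (inv_ne_zero hl0) hx h₁ hw
    (e := e)
    (blockMat_col 0 _ _ (.inl 0) (by
      rintro (u | ⟨u, i⟩ | i) <;> try fin_cases u
      all_goals simp [specialX, blockFun]))
    (blockMat_col 0 _ _ (.inl 2) (by
      rintro (u | ⟨u, i⟩ | i) <;> try fin_cases u
      all_goals simp [specialX, blockFun]))
    (by
      have r0 := blockMat_row 0 (specialX a w y e)
        (fromBlocks (blockDiagonal fun _ : Fin (j + 1) => !![a₁, 1; γ₁, δ₁]) 0
          (lowerGlue (t := t)) 1) (.inl 0) (x := Pi.single A0 1) (by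
        rintro (u | ⟨u, i⟩ | i) <;> try fin_cases u
        all_goals simp [specialX, blockFun])
      have r1 := blockMat_row 0 (specialX a w y e)
        (fromBlocks (blockDiagonal fun _ : Fin (j + 1) => !![a₁, 1; γ₁, δ₁]) 0
          (lowerGlue (t := t)) 1) (.inl 1) (x := a • Pi.single A1 1 + w • Pi.single (c 0) 1) (by
        rintro (u | ⟨u, i⟩ | i) <;> try fin_cases u
        all_goals simp [specialX, blockFun])
      have r2 := blockMat_row 0 (specialX a w y e)
        (fromBlocks (blockDiagonal fun _ : Fin (j + 1) => !![a₁, 1; γ₁, δ₁]) 0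
          (lowerGlue (t := t)) 1) (.inl 2)
          (x := Pi.single A0 1 + y • Pi.single A1 1 + e • Pi.single (c 0) 1) (by
        rintro (u | ⟨u, i⟩ | i) <;> try fin_cases u
        all_goals simp [specialX, blockFun])
      simp only [blockFun] at r0 r1 r2
      rw [sub_vecMul, add_vecMul, smul_vecMul, smul_vecMul, smul_vecMul, r0, r1, r2]
      have h1 : (Pi.single A1 1 : Idx (j + 1) t → F) = (a * e - w * y) • Pi.single A1 1 := by
        rw [hdet, one_smul]
      refine Eq.trans ?_ h1.symm
      module)
  have hf : ∀ l l' : Fin t, l = l' := fun l l' => by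
    have := l.2; have := l'.2; ext; omega
  have hs : ∀ i : Fin (j + 1), i.succ = 1 ↔ i = 0 := fun i => by
    rw [← Fin.succ_zero_eq_one, Fin.succ_inj]
  have h0 : ∀ i : Fin (j + 1), 0 = i ↔ i = 0 := fun i => eq_comm
  refine elemIn_all hH h₁ h₃ e10 ec0 e01 e0c ?_ ?_ hγ₁ hγ₃ (a₁ := a₁) (δ₁ := δ₁) (a₃ := a₃)
    (δ₃ := δ₃) ?_ ?_ ?_ ?_ ?_ ?_
  · exact blockMat_row 0 _ _ (.inl 0) (by
      rintro (u | ⟨u, i⟩ | i) <;> try fin_cases u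
      all_goals simp [specialX, blockFun])
  · exact blockMat_row (Fin.last _) _ _ (.inl 0) (by
      rintro (u | ⟨u, i⟩ | i) <;> try fin_cases u
      all_goals simp [specialX, blockFun])
  · intro k
    have := blockMat_col (Fin.last _) (specialX a' w' y' e')
      (fromBlocks (blockDiagonal fun _ : Fin (j + 1) => !![a₃, 1; γ₃, δ₃])
        (upperGlue (t := t)) 0 1) (.inr (.inl (1, k)))
        (x := Pi.single (b k) 1 + δ₃ • Pi.single (c k.castSucc) 1) (by
      rintro (u | ⟨u, i⟩ | i) <;> try fin_cases u
      all_goals simp [specialX, blockFun, Pi.single_apply, blockDiagonal_apply])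
    simpa [blockFun] using this
  · intro k
    have := blockMat_col 0 (specialX a w y e)
      (fromBlocks (blockDiagonal fun _ : Fin (j + 1) => !![a₁, 1; γ₁, δ₁]) 0
        (lowerGlue (t := t)) 1) (.inr (.inl (0, k)))
        (x := γ₁ • Pi.single (c k.succ) 1 + a₁ • Pi.single (b k) 1) (by
      rintro (u | ⟨u, i⟩ | i) <;> try fin_cases u
      all_goals simp [specialX, blockFun, Pi.single_apply, blockDiagonal_apply, lowerGlue])
    simpa [blockFun] using this
  · intro l
    have := blockMat_col 0 (specialX a w y e)
      (fromBlocks (blockDiagonal fun _ : Fin (j + 1) => !![a₁, 1; γ₁, δ₁]) 0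
        (lowerGlue (t := t)) 1) (.inr (.inl (1, 0)))
        (x := Pi.single (f l) 1 + Pi.single (b 0) 1 + δ₁ • Pi.single (c (Fin.succ 0)) 1) (by
      rintro (u | ⟨u, i⟩ | i) <;> try fin_cases u
      all_goals simp [specialX, blockFun, Pi.single_apply, blockDiagonal_apply, lowerGlue, hf _ l,
        hs])
    simpa [blockFun] using this
  · intro k
    have := blockMat_row (Fin.last _) (specialX a' w' y' e')
      (fromBlocks (blockDiagonal fun _ : Fin (j + 1) => !![a₃, 1; γ₃, δ₃])
        (upperGlue (t := t)) 0 1) (.inr (.inl (1, k)))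
        (x := γ₃ • Pi.single (b k) 1 + δ₃ • Pi.single (c k.castSucc) 1) (by
      rintro (u | ⟨u, i⟩ | i) <;> try fin_cases u
      all_goals simp [specialX, blockFun, Pi.single_apply, blockDiagonal_apply, eq_comm (a := k),
        upperGlue])
    simpa [blockFun] using this
  · intro k
    have := blockMat_row 0 (specialX a w y e)
      (fromBlocks (blockDiagonal fun _ : Fin (j + 1) => !![a₁, 1; γ₁, δ₁]) 0
        (lowerGlue (t := t)) 1) (.inr (.inl (0, k)))
        (x := Pi.single (c k.succ) 1 + a₁ • Pi.single (b k) 1) (by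
      rintro (u | ⟨u, i⟩ | i) <;> try fin_cases u
      all_goals simp [specialX, blockFun, Pi.single_apply, blockDiagonal_apply, eq_comm (a := k)])
    simpa [blockFun] using this
  · intro l
    have := blockMat_row (Fin.last _) (specialX a' w' y' e')
      (fromBlocks (blockDiagonal fun _ : Fin (j + 1) => !![a₃, 1; γ₃, δ₃])
        (upperGlue (t := t)) 0 1) (.inr (.inl (0, 0)))
        (x := Pi.single (f l) 1 + Pi.single (c 0) 1 + a₃ • Pi.single (b 0) 1) (by
      rintro (u | ⟨u, i⟩ | i) <;> try fin_cases u
      all_goals simp [specialX, blockFun, Pi.single_apply, blockDiagonal_apply, upperGlue, hf _ l,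
        h0])
    simpa [blockFun] using this

end Assembly

/-! ### Four generators with product one -/

section Four

open Idx

variable {F : Type*} [Field F]

lemma special_poly_ne_zero {l ζ : F} {m : ℕ} (hζ0 : ζ ≠ 0) (hζ : ζ ^ m = 1) (hl1 : l ≠ 1)
    (hlm : l ^ m ≠ 1) : (l - 1) * (l ^ 2 - (ζ + ζ⁻¹) * l + 1) ≠ 0 := by
  have h : l ^ 2 - (ζ + ζ⁻¹) * l + 1 = (l - ζ) * (l - ζ⁻¹) := by
    linear_combination -(mul_inv_cancel₀ hζ0)
  rw [h]
  refine mul_ne_zero (sub_ne_zero.mpr hl1) (mul_ne_zero (sub_ne_zero.mpr ?_) (sub_ne_zero.mpr ?_))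
  · rintro rfl; exact hlm hζ
  · rintro rfl; exact hlm (by rw [inv_pow, hζ, inv_one])

lemma exists_coe_eq {ι : Type*} [Fintype ι] [DecidableEq ι] {M : Matrix ι ι F} (h : M.det = 1) :
    ∃ Y : Matrix.SpecialLinearGroup ι F, SpecialLinearGroup.coeMonoidHom Y = M := ⟨⟨M, h⟩, rfl⟩

/-- Four elements of orders dividing the `m i`, with product one, generating `SL` on the index set
`Idx (j + 1) t`; here `l` is a generator of the multiplicative group of `F`. The four elements are
`Y₁, X₁, X₃⁻¹, Y₃⁻¹`, where `Y₁ X₁ = Y₃ X₃` are the two factorisations of `prodMat l`. -/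
theorem four_generators [Fintype F] {j t : ℕ} (ht : t ≤ 1) {l : F}
    (hl : orderOf l = Fintype.card F - 1) (m : Fin 4 → ℕ) (hm : ∀ i, 3 ≤ m i)
    (hmd : ∀ i, m i ∣ Fintype.card F - 1) (hbig : ∀ i k, 2 * (m i * m k) < Fintype.card F - 1) :
    ∃ x : Fin 4 → SpecialLinearGroup (Idx (j + 1) t) F, (∀ i, x i ^ m i = 1) ∧
      x 0 * x 1 * x 2 * x 3 = 1 ∧ Subgroup.closure (Set.range x) = ⊤ := by
  have hq18 : 18 < Fintype.card F - 1 := by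
    have h1 := hbig 0 0
    have h2 := Nat.mul_le_mul (hm 0) (hm 0)
    omega
  have hlk : ∀ k, 0 < k → k < Fintype.card F - 1 → l ^ k ≠ 1 := fun k hk hk' =>
    pow_ne_one_of_lt_orderOf (by omega) (by omega)
  have hl0 : l ≠ 0 := by
    rintro rfl
    have : orderOf (0 : F) = 0 := orderOf_zero F
    omega
  have hl3 : l ^ 3 ≠ 1 := hlk 3 (by omega) (by omega)
  have hl1 : l ≠ 1 := by simpa using hlk 1 (by omega) (by omega)
  have hord : Fintype.card F ≤ 3 * orderOf (l ^ 3)⁻¹ + 1 := by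
    have h : orderOf (l ^ 3)⁻¹ = orderOf (l ^ 3) := by
      have := orderOf_inv (Units.mk0 (l ^ 3) (pow_ne_zero _ hl0))
      rw [← orderOf_units, ← orderOf_units] at this
      simpa using this
    rw [h, orderOf_pow' _ (by omega), hl]
    have h1 : (Fintype.card F - 1).gcd 3 ≤ 3 := Nat.gcd_le_right _ (by omega)
    have h2 := Nat.mul_le_mul_right ((Fintype.card F - 1) / (Fintype.card F - 1).gcd 3) h1
    rw [Nat.mul_div_cancel' (Nat.gcd_dvd_left _ _)] at h2
    omega
  -- a primitive root of unity for each prescribed order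
  have hprim : ∀ i, ∃ ζ : F, IsPrimitiveRoot ζ (m i) := by
    intro i
    obtain ⟨r, hr⟩ := hmd i
    refine ⟨l ^ r, ?_⟩
    refine IsPrimitiveRoot.pow (n := Fintype.card F - 1) (by omega) ?_ (by rw [hr, mul_comm])
    rw [← hl]; exact IsPrimitiveRoot.orderOf l
  choose ζ hζ using hprim
  have hζ0 : ∀ i, ζ i ≠ 0 := fun i => (hζ i).ne_zero (by have := hm i; omega)
  have hlm : ∀ i, l ^ m i ≠ 1 := fun i => by
    have h1 := hbig i i
    have h2 := Nat.le_mul_self (m i)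
    exact hlk _ (by have := hm i; omega) (by omega)
  have hωm : ∀ i k, (l ^ 2) ^ (m i * m k) ≠ 1 := fun i k => by
    rw [← pow_mul]
    have := hm i
    have := hm k
    exact hlk _ (by positivity) (hbig i k)
  have hω2 : (l ^ 2) ^ 2 ≠ 1 := by rw [← pow_mul]; exact hlk _ (by omega) (by omega)
  have hpair : ∀ i k, _ := fun i k => pair_exists (pow_ne_zero 2 hl0) hω2 (hζ0 i) (hζ0 k)
    (hζ i).pow_eq_one (hζ k).pow_eq_one (hωm i k)
  have hspec : ∀ i k, _ := fun i k => special_exists (τ₁ := ζ i + (ζ i)⁻¹) hl0 hl3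
    (special_poly_ne_zero (hζ0 k) (hζ k).pow_eq_one hl1 (hlm k))
  obtain ⟨a, w, y, e, Zx, hw, hdet, dX, dZx, cX, cZx, hXZ⟩ := hspec 0 1
  obtain ⟨a', w', y', e', Zx', -, -, dX', dZx', cX', cZx', hXZ'⟩ := hspec 3 2
  obtain ⟨a₁, γ₁, δ₁, Z₁, hγ₁, d₁, dZ₁, c₁, cZ₁, hCZ₁⟩ := hpair 0 1
  obtain ⟨a₃, γ₃, δ₃, Z₃, hγ₃, d₃, dZ₃, c₃, cZ₃, hCZ₃⟩ := hpair 3 2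
  have bdet : ∀ M : Matrix (Fin 2) (Fin 2) F, M.det = 1 →
      (blockDiagonal fun _ : Fin (j + 1) => M).det = 1 := fun M hM => by
    simp [det_blockDiagonal, hM]
  have bmul : ∀ {M N D : Matrix (Fin 2) (Fin 2) F}, M * N = D →
      (blockDiagonal fun _ : Fin (j + 1) => M) * blockDiagonal (fun _ => N) =
        blockDiagonal fun _ => D := fun h => by rw [← blockDiagonal_mul, h]
  obtain ⟨R, dL, dR, cL, cR, hLR⟩ := lower_exists (blockDiagonal_quad c₁) (blockDiagonal_quad cZ₁)
    (bdet _ d₁) (bdet _ dZ₁) (bmul hCZ₁) (lowerGlue (t := t) (j := j))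
  obtain ⟨R', dU, dR', cU, cR', hUR⟩ := upper_exists (blockDiagonal_quad c₃)
    (blockDiagonal_quad cZ₃) (bdet _ d₃) (bdet _ dZ₃) (bmul hCZ₃) (upperGlue (t := t) (j := j))
  obtain ⟨Y₁, hY₁⟩ := exists_coe_eq (blockMat_det 0 dX dL)
  obtain ⟨X₁, hX₁⟩ := exists_coe_eq (blockMat_det 0 dZx dR)
  obtain ⟨Y₃, hY₃⟩ := exists_coe_eq (blockMat_det (Fin.last _) dX' dU)
  obtain ⟨X₃, hX₃⟩ := exists_coe_eq (blockMat_det (Fin.last _) dZx' dR')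
  have hP₁ : SpecialLinearGroup.coeMonoidHom (Y₁ * X₁) = prodMat l := by
    rw [map_mul, hY₁, hX₁]; exact blockMat_mul 0 hXZ hLR
  have hP₃ : SpecialLinearGroup.coeMonoidHom (Y₃ * X₃) = prodMat l := by
    rw [map_mul, hY₃, hX₃]; exact blockMat_mul (Fin.last _) hXZ' hUR
  have hPP : Y₁ * X₁ = Y₃ * X₃ := SpecialLinearGroup.coeMonoidHom_injective (hP₁.trans hP₃.symm)
  have pw : ∀ (Y : SpecialLinearGroup (Idx (j + 1) t) F) (k : ℕ),
      SpecialLinearGroup.coeMonoidHom Y ^ k = 1 → Y ^ k = 1 := fun Y k h =>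
    SpecialLinearGroup.coeMonoidHom_injective (by rw [map_pow, h, map_one])
  have pY₁ : Y₁ ^ m 0 = 1 := pw _ _ (by
    rw [hY₁]; exact blockMat_pow _ (cX.pow_eq_one (hm 0) (hζ 0)) (cL.pow_eq_one (hm 0) (hζ 0)))
  have pX₁ : X₁ ^ m 1 = 1 := pw _ _ (by
    rw [hX₁]; exact blockMat_pow _ (cZx.pow_eq_one (hm 1) (hζ 1)) (cR.pow_eq_one (hm 1) (hζ 1)))
  have pY₃ : Y₃ ^ m 3 = 1 := pw _ _ (by
    rw [hY₃]; exact blockMat_pow _ (cX'.pow_eq_one (hm 3) (hζ 3)) (cU.pow_eq_one (hm 3) (hζ 3)))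
  have pX₃ : X₃ ^ m 2 = 1 := pw _ _ (by
    rw [hX₃]; exact blockMat_pow _ (cZx'.pow_eq_one (hm 2) (hζ 2)) (cR'.pow_eq_one (hm 2) (hζ 2)))
  refine ⟨![Y₁, X₁, X₃⁻¹, Y₃⁻¹], ?_, ?_, ?_⟩
  · intro i
    fin_cases i
    · exact pY₁
    · exact pX₁
    · change X₃⁻¹ ^ m 2 = 1
      rw [inv_pow, pX₃, inv_one]
    · change Y₃⁻¹ ^ m 3 = 1
      rw [inv_pow, pY₃, inv_one]
  · change Y₁ * X₁ * X₃⁻¹ * Y₃⁻¹ = 1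
    rw [hPP]; group
  · obtain ⟨G, hG⟩ : ∃ G, G = Subgroup.closure (Set.range ![Y₁, X₁, X₃⁻¹, Y₃⁻¹]) := ⟨_, rfl⟩
    have hsub : ∀ i, ![Y₁, X₁, X₃⁻¹, Y₃⁻¹] i ∈ G := fun i => by
      rw [hG]; exact Subgroup.subset_closure ⟨i, rfl⟩
    have gY₁ : Y₁ ∈ G := hsub 0
    have gX₁ : X₁ ∈ G := hsub 1
    have gY₃ : Y₃ ∈ G := inv_mem_iff.mp (hsub 3)
    rw [← hG]
    have memH : ∀ Y ∈ G, SpecialLinearGroup.coeMonoidHom Y ∈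
        G.toSubmonoid.map SpecialLinearGroup.coeMonoidHom := fun Y hY => ⟨Y, hY, rfl⟩
    have hH : InvClosed (G.toSubmonoid.map SpecialLinearGroup.coeMonoidHom) := by
      rintro _ ⟨Y, hY, rfl⟩
      refine ⟨_, memH _ (G.inv_mem hY), ?_⟩
      rw [← map_mul, mul_inv_cancel, map_one]
    have hall := block_walk (by omega) hl0 hl3 hord ht hw hdet hγ₁ hγ₃ hH
      (by rw [← hP₁]; exact memH _ (G.mul_mem gY₁ gX₁)) (by rw [← hY₁]; exact memH _ gY₁)
      (by rw [← hY₃]; exact memH _ gY₃)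
    have : Nontrivial (Idx (j + 1) t) := ⟨A0, A1, by simp⟩
    refine eq_top_of_transvection G fun i k hik x => ?_
    obtain ⟨Y, hY, hYe⟩ := hall i k hik x
    have : SpecialLinearGroup.transvection hik x = Y := by
      apply SpecialLinearGroup.coeMonoidHom_injective
      rw [hYe, SpecialLinearGroup.coeMonoidHom_apply, SpecialLinearGroup.transvection_coe,
        ← single_eq_single_vecMulVec_single, smul_single, smul_eq_mul, mul_one]
    rw [this]; exact hY

end Four

/-! ### Padding with trivial generators and reindexing -/

section Extension

lemma prod_map_filter {ι G : Type*} [Monoid G] (p : ι → Prop) [DecidablePred p] (x : ι → G)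
    (h : ∀ i, ¬ p i → x i = 1) (L : List ι) :
    (L.map x).prod = ((L.filter p).map x).prod := by
  induction L with
  | nil => rfl
  | cons a L ih =>
    by_cases ha : p a
    · simp [ha, ih]
    · simp [ha, ih, h a ha]

/-- Inserting trivial entries into an ordered product does not change it. -/
lemma prod_extend {G : Type*} [Monoid G] {k d : ℕ} (φ : Fin k ↪o Fin d) (y : Fin k → G) :
    (List.ofFn (Function.extend φ y 1)).prod = (List.ofFn y).prod := by
  classical
  have h : (List.finRange d).filter (fun i => ∃ a, φ a = i) = (List.finRange k).map φ := by
    refine List.SortedLT.eq_of_mem_iff ?_ ?_ (by simp)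
    · exact ((List.sortedLT_finRange d).pairwise.filter _).sortedLT
    · exact ((List.sortedLT_finRange k).pairwise.map φ fun a b hab => φ.strictMono hab).sortedLT
  rw [List.ofFn_eq_map, List.ofFn_eq_map, prod_map_filter (fun i => ∃ a, φ a = i)
    (Function.extend φ y 1) (fun i hi => Function.extend_apply' _ _ _ hi), h, List.map_map,
    Function.extend_comp φ.injective]

end Extension

section Transport

variable {F : Type*} [Field F]

lemma exists_mulEquiv {ι κ : Type*} [Fintype ι] [DecidableEq ι] [Fintype κ] [DecidableEq κ]
    (e : ι ≃ κ) :
    Nonempty (Matrix.SpecialLinearGroup ι F ≃* Matrix.SpecialLinearGroup κ F) := by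
  refine ⟨{
    toFun := fun A => ⟨reindexAlgEquiv F F e A.1, by
      rw [coe_reindexAlgEquiv, det_reindex_self]; exact A.2⟩
    invFun := fun A => ⟨reindexAlgEquiv F F e.symm A.1, by
      rw [coe_reindexAlgEquiv, det_reindex_self]; exact A.2⟩
    left_inv := fun A => Subtype.ext (by ext; simp)
    right_inv := fun A => Subtype.ext (by ext; simp)
    map_mul' := fun A B => Subtype.ext (map_mul (reindexAlgEquiv F F e) A.1 B.1) }⟩

/-- Every `n ≥ 5` is the size `3 + 2 (j + 1) + t` of some `Idx (j + 1) t` with `t ≤ 1`, which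
transports `four_generators` to `SL_n`. -/
theorem four_generators_fin [Fintype F] {n : ℕ} (hn : 5 ≤ n) (m : Fin 4 → ℕ) (hm : ∀ i, 3 ≤ m i)
    (hmd : ∀ i, m i ∣ Fintype.card F - 1) (hbig : ∀ i k, 2 * (m i * m k) < Fintype.card F - 1) :
    ∃ x : Fin 4 → Matrix.SpecialLinearGroup (Fin n) F, (∀ i, x i ^ m i = 1) ∧
      x 0 * x 1 * x 2 * x 3 = 1 ∧ Subgroup.closure (Set.range x) = ⊤ := by
  obtain ⟨u, hu⟩ := IsCyclic.exists_generator (α := Fˣ)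
  have hl : orderOf (u : F) = Fintype.card F - 1 := by
    rw [orderOf_units, orderOf_eq_card_of_forall_mem_zpowers hu, Nat.card_units,
      Nat.card_eq_fintype_card]
  obtain ⟨x, hx, hp, hc⟩ := four_generators (j := (n - 5) / 2) (t := (n - 5) % 2) (by omega) hl m
    hm hmd hbig
  have hcard : Fintype.card (Idx ((n - 5) / 2 + 1) ((n - 5) % 2)) = n := by
    rw [card_idx]; omega
  obtain ⟨E⟩ := exists_mulEquiv (F := F) (Fintype.equivFinOfCardEq hcard)
  refine ⟨fun i => E (x i), fun i => by rw [← map_pow, hx, map_one], ?_, ?_⟩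
  · rw [← map_mul, ← map_mul, ← map_mul, hp, map_one]
  · have h1 : Set.range (fun i => E (x i)) = E.toMonoidHom '' Set.range x := by
      rw [← Set.range_comp]; rfl
    rw [h1, ← MonoidHom.map_closure, hc]
    exact Subgroup.map_top_of_surjective _ E.surjective

end Transport

/-! ### The generation theorem -/

/-- The hypothesis on `d` forces at least four of the orders to exceed two. -/
lemma four_le_card {d : ℕ} (m : Fin d → ℕ) (hm : ∀ i, 2 ≤ m i)
    (h : 3 + 2 * ∑ i, 1 / (m i : ℝ) < (d : ℝ)) :
    4 ≤ (Finset.univ.filter fun i => 3 ≤ m i).card := by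
  have h1 : ∑ i, (1 - 2 * (1 / (m i : ℝ))) ≤ ∑ i, if 3 ≤ m i then (1 : ℝ) else 0 := by
    refine Finset.sum_le_sum fun i _ => ?_
    split_ifs with hi
    · have : (0 : ℝ) ≤ 1 / (m i : ℝ) := by positivity
      linarith
    · have : m i = 2 := by have := hm i; omega
      rw [this]; norm_num
  rw [Finset.sum_sub_distrib, ← Finset.mul_sum, Finset.sum_boole] at h1
  simp only [Finset.sum_const, Finset.card_univ, Fintype.card_fin, nsmul_eq_mul, mul_one] at h1
  have h2 : (3 : ℝ) < ((Finset.univ.filter fun i => 3 ≤ m i).card : ℝ) := by linarith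
  exact_mod_cast h2

/-- Corollary 1.6: `(m_1,…,m_d)`-generation of `SL_n(q)`. -/
theorem SL_is_m_generated
    (d : ℕ) (m : Fin d → ℕ) (hd : 5 ≤ d) (hm : ∀ i, 2 ≤ m i)
    (hdbig : max (3 + 2 * ∑ i, 1 / (m i : ℝ)) (4 + ∑ i, 1 / (m i : ℝ)) < (d : ℝ))
    (μ ν N₁ N₂ : ℝ)
    (hμ : μ = (d : ℝ) - 2 - ∑ i, 1 / (m i : ℝ))
    (hν : ν = max 2 (1 + ∑ i, 1 / (m i : ℝ)))
    (hN₁ : N₁ = max ((2 + ∑ i, 1 / (m i : ℝ)) / μ) ((Finset.univ.sup m : ℕ) : ℝ) + 1)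
    (hN₂ : N₂ = max N₁ ((d + 16) / (4 * (μ - 2)) + 1))
    (n : ℕ) (hn : ν * N₂ + ∑ i, (m i : ℝ) ≤ (n : ℝ)) :
    ∃ B : ℕ, ∀ q : ℕ, IsPrimePow q → B < q → (∀ i, q % m i = 1) →
      ∀ (F : Type) [Field F] [Fintype F], Fintype.card F = q →
        ∃ x : Fin d → Matrix.SpecialLinearGroup (Fin n) F,
          (∀ i, x i ^ m i = 1) ∧ (List.ofFn x).prod = 1 ∧
          Subgroup.closure (Set.range x) = ⊤ := by
  have hn5 : 5 ≤ n := by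
    have h1 : 0 ≤ ν := by rw [hν]; exact le_trans (by norm_num) (le_max_left _ _)
    have h2 : 0 ≤ N₂ := by
      have h3 : (0 : ℝ) ≤ N₁ := by
        rw [hN₁]
        have := le_max_right ((2 + ∑ i, 1 / (m i : ℝ)) / μ) ((Finset.univ.sup m : ℕ) : ℝ)
        have : (0 : ℝ) ≤ ((Finset.univ.sup m : ℕ) : ℝ) := Nat.cast_nonneg _
        linarith
      rw [hN₂]; exact h3.trans (le_max_left _ _)
    have h4 : ∑ _i : Fin d, (1 : ℝ) ≤ ∑ i, (m i : ℝ) :=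
      Finset.sum_le_sum fun i _ => by exact_mod_cast (by have := hm i; omega : 1 ≤ m i)
    simp only [Finset.sum_const, Finset.card_univ, Fintype.card_fin, nsmul_eq_mul, mul_one] at h4
    have h5 : (d : ℝ) ≤ n := by nlinarith [mul_nonneg h1 h2]
    exact hd.trans (by exact_mod_cast h5)
  have hcard := four_le_card m hm (lt_of_le_of_lt (le_max_left _ _) hdbig)
  obtain ⟨S, hS, hS4⟩ := Finset.exists_subset_card_eq hcard
  obtain ⟨φ, hφ⟩ : ∃ φ : Fin 4 ↪o Fin d, ∀ i, 3 ≤ m (φ i) :=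
    ⟨S.orderEmbOfFin hS4, fun i => by simpa using hS (S.orderEmbOfFin_mem hS4 i)⟩
  refine ⟨2 * (Finset.univ.sup m * Finset.univ.sup m) + 1, ?_⟩
  intro q _ hBq hq F _ _ hF
  have hsup : ∀ i, m i ≤ Finset.univ.sup m := fun i => Finset.le_sup (Finset.mem_univ i)
  obtain ⟨y, hy, hyp, hyc⟩ := four_generators_fin (F := F) hn5 (m ∘ φ) hφ
    (fun i => by
      rw [hF]
      have := Nat.dvd_sub_mod (n := m (φ i)) q
      rwa [hq] at this)
    (fun i k => by
      rw [hF]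
      have := Nat.mul_le_mul (hsup (φ i)) (hsup (φ k))
      simp only [Function.comp_apply]
      omega)
  refine ⟨Function.extend φ y 1, ?_, ?_, ?_⟩
  · intro i
    by_cases h : ∃ k, φ k = i
    · obtain ⟨k, rfl⟩ := h
      rw [φ.injective.extend_apply]; exact hy k
    · rw [Function.extend_apply' _ _ _ h, Pi.one_apply, one_pow]
  · rw [prod_extend, ← hyp]
    simp [List.ofFn_succ, mul_assoc]
  · rw [eq_top_iff, ← hyc, Subgroup.closure_le]
    rintro _ ⟨k, rfl⟩
    exact Subgroup.subset_closure ⟨φ k, φ.injective.extend_apply _ _ _⟩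
end

section
/- Let n ≥ 2 be an integer, q a prime power and s > 0 a real number. Then Σ_{χ ∈ Irr(GL_n(q)), χ(1) > 1} χ(1)^{−s} ≤ (q − 1)·(Σ_{χ ∈ Irr(SL_n(q))} χ(1)^{−s} − 1). -/
/-!
Let `N = SL_n(q)`, `G = GL_n(q)` and `A = F_q^×`, so that `1 → N → G → A → 1` is exact via the
determinant and `|G| = (q - 1) |N|`.

Send each `χ ∈ Irr(G)` with `χ(1) > 1` to an irreducible constituent `ψ` of its restriction to `N`
(`exists_constituent`). Then `ψ(1) ≤ χ(1)`, hence `χ(1)^(-s) ≤ ψ(1)^(-s)`. At most `|G| / |N|`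
characters `χ` lie above a given `ψ` (`card_mul_card_le`). Moreover `ψ` is not trivial: the `q - 1`
linear characters of `G` inflated from `A` lie above the trivial character and already exhaust this
bound (`degree_eq_one_of_trivial_constituent`). Summing over the fibres of `χ ↦ ψ` gives the claim.

The bound on the fibres replaces Frobenius reciprocity and induced characters by Bessel's inequality
in `ℓ²(G)`, applied to the irreducible characters of `G` and the extension of `ψ` by zero. The same
bound for the trivial subgroup shows that `Irr(G)` is finite, without which the `finsum`s would
take the junk value `0`.
-/

open CategoryTheory in
/-- The set of irreducible complex characters of a group `G`. -/
def irrChars (G : Type) [Group G] : Set (G → ℂ) :=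
  {f | ∃ V : FDRep ℂ G, Simple V ∧ f = V.character}

open scoped ComplexOrder in
/-- A complex character of a finite group takes complex conjugate values at `g` and `g⁻¹`: averaging
`(M h)ᴴ * M h` over the group gives an invariant positive definite form `P`, which conjugates the
matrix of `g⁻¹` to the adjoint of the matrix of `g`. -/
theorem character_inv_eq_conj {G V : Type*} [Group G] [Finite G] [AddCommGroup V] [Module ℂ V]
    [FiniteDimensional ℂ V] (ρ : Representation ℂ G V) (g : G) :
    ρ.character g⁻¹ = starRingEnd ℂ (ρ.character g) := by
  classical
  cases nonempty_fintype G
  let b := Module.finBasis ℂ V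
  let M : G →* Matrix _ _ ℂ := (LinearMap.toMatrixAlgEquiv b).toAlgHom.toMonoidHom.comp ρ
  have hM : ∀ h, ρ.character h = (M h).trace := fun h ↦
    LinearMap.trace_eq_matrix_trace ℂ b _
  -- The matrix of a `G`-invariant Hermitian inner product.
  let P := ∑ h : G, (M h).conjTranspose * M h
  have hinv : ∀ h, M h * M h⁻¹ = 1 := fun h ↦ by rw [← map_mul]; simp
  have hinv' : ∀ h, M h⁻¹ * M h = 1 := fun h ↦ by rw [← map_mul]; simp
  have hP : P.PosDef := by
    refine Matrix.posDef_sum Finset.univ_nonempty fun h _ ↦ ?_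
    refine Matrix.PosDef.conjTranspose_mul_self _ fun v w hvw ↦ ?_
    simpa [Matrix.mulVec_mulVec, hinv'] using congrArg (M h⁻¹).mulVec hvw
  have hPu : IsUnit P.det := (Matrix.isUnit_iff_isUnit_det P).1 hP.isUnit
  have hinvar : (M g).conjTranspose * P = P * M g⁻¹ := by
    simp only [P, Finset.mul_sum, Finset.sum_mul]
    refine Fintype.sum_equiv (Equiv.mulRight g) _ _ fun h ↦ ?_
    simp [mul_assoc, hinv]
  have hconj : (M g).conjTranspose = P * M g⁻¹ * P⁻¹ := by
    rw [← hinvar, Matrix.mul_nonsing_inv_cancel_right _ _ hPu]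
  rw [hM, hM, starRingEnd_apply, ← Matrix.trace_conjTranspose, hconj, Matrix.trace_mul_comm,
    Matrix.nonsing_inv_mul_cancel_left _ _ hPu]

section
variable {G N : Type} [Group G] [Group N]

theorem irrChars_inv [Finite G] {χ : G → ℂ} (hχ : χ ∈ irrChars G) (g : G) :
    χ g⁻¹ = starRingEnd ℂ (χ g) := by
  obtain ⟨V, -, rfl⟩ := hχ
  exact character_inv_eq_conj V.ρ g

theorem irrChars_sum_self [Fintype G] {χ : G → ℂ} (hχ : χ ∈ irrChars G) :
    ∑ g, χ g * χ g⁻¹ = Nat.card G := by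
  obtain ⟨V, hV, rfl⟩ := hχ
  exact V.simple_iff_char_is_norm_one.1 hV

theorem irrChars_sum_of_ne [Fintype G] {χ ψ : G → ℂ} (hχ : χ ∈ irrChars G) (hψ : ψ ∈ irrChars G)
    (hne : χ ≠ ψ) : ∑ g, χ g * ψ g⁻¹ = 0 := by
  obtain ⟨V, hV, rfl⟩ := hχ
  obtain ⟨W, hW, rfl⟩ := hψ
  have hG : (Nat.card G : ℂ) ≠ 0 := NeZero.ne _
  have := invertibleOfNonzero hG
  have h := FDRep.char_orthonormal V W
  rw [if_neg (fun ⟨i⟩ ↦ hne (FDRep.char_iso i))] at h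
  simpa [hG] using h

theorem irrChars_exists_degree [Finite G] {χ : G → ℂ} (hχ : χ ∈ irrChars G) :
    ∃ d : ℕ, 0 < d ∧ χ 1 = d := by
  cases nonempty_fintype G
  have h := irrChars_sum_self hχ
  obtain ⟨V, hV, rfl⟩ := hχ
  refine ⟨_, Nat.pos_of_ne_zero fun h0 ↦ ?_, V.char_one⟩
  have : Subsingleton V := Module.finrank_zero_iff.1 h0
  have hz : ∀ g, V.character g = 0 := fun g ↦ by
    rw [FDRep.character, Subsingleton.elim (V.ρ g) 0, map_zero]
  simp only [hz, mul_zero, Finset.sum_const_zero] at h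
  exact NeZero.ne (Nat.card G : ℂ) h.symm

/-- The linear characters of `G` are irreducible characters. -/
theorem linear_mem_irrChars [Finite G] (l : G →* ℂˣ) : (fun g ↦ (l g : ℂ)) ∈ irrChars G := by
  cases nonempty_fintype G
  let ρ : Representation ℂ G ℂ :=
    { toFun := fun g ↦ (l g : ℂ) • LinearMap.id
      map_one' := by simp; rfl
      map_mul' := fun g h ↦ by ext; simp [mul_comm] }
  have hρ : (FDRep.of ρ).character = fun g ↦ (l g : ℂ) := by
    funext g
    change LinearMap.trace ℂ ℂ ((l g : ℂ) • LinearMap.id) = _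
    simp
  refine ⟨FDRep.of ρ, ?_, hρ.symm⟩
  rw [FDRep.simple_iff_char_is_norm_one, hρ]
  simp

/-- A nonzero subrepresentation of minimal dimension is irreducible. -/
theorem exists_irreducible_subrepresentation {V : Type} [AddCommGroup V] [Module ℂ V]
    [FiniteDimensional ℂ V] [Nontrivial V] (ρ : Representation ℂ N V) :
    ∃ σ : Subrepresentation ρ, σ.toRepresentation.IsIrreducible := by
  obtain ⟨σ, hσ, hmin⟩ := exists_minimalFor_of_wellFoundedLT
    (fun σ : Subrepresentation ρ ↦ σ.toSubmodule ≠ ⊥)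
    (fun σ ↦ Module.finrank ℂ σ.toSubmodule) ⟨⊤, top_ne_bot⟩
  have hnt : Nontrivial σ.toSubmodule := Submodule.nontrivial_iff_ne_bot.2 hσ
  refine ⟨σ, { exists_pair_ne := ⟨⊥, ⊤, fun h ↦ ?_⟩, eq_bot_or_eq_top := fun τ ↦ ?_ }⟩
  · exact bot_ne_top (congrArg Subrepresentation.toSubmodule h)
  · by_cases hτ : τ.toSubmodule = ⊥
    · exact .inl (Subrepresentation.toSubmodule_injective hτ)
    right
    apply Subrepresentation.toSubmodule_injective
    let τ' : Subrepresentation ρ :=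
      { toSubmodule := τ.toSubmodule.map σ.toSubmodule.subtype
        apply_mem_toSubmodule := by
          rintro g _ ⟨w, hw, rfl⟩
          exact ⟨_, τ.apply_mem_toSubmodule g hw, rfl⟩ }
    have hle := hmin (j := τ') (fun h ↦ hτ
      (Submodule.map_injective_of_injective σ.toSubmodule.injective_subtype
        (h.trans (Submodule.map_bot _).symm)))
    have hfr : Module.finrank ℂ τ'.toSubmodule = Module.finrank ℂ τ.toSubmodule :=
      Submodule.finrank_map_subtype_eq _ _
    refine Submodule.eq_top_of_finrank_eq (le_antisymm (Submodule.finrank_le _) ?_)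
    rw [← hfr]
    refine hle ?_
    exact hfr.trans_le (Submodule.finrank_le _)

/-- The restriction of `χ` along `φ` has an irreducible constituent `ψ`, that is, one of nonzero
multiplicity, and its degree is at most that of `χ`. -/
theorem exists_constituent [Fintype N] [Finite G] (φ : N →* G) {χ : G → ℂ} (hχ : χ ∈ irrChars G) :
    ∃ ψ ∈ irrChars N, ∑ n, χ (φ n) * ψ n⁻¹ ≠ 0 ∧ (ψ 1).re ≤ (χ 1).re := by
  obtain ⟨d, hd, hd1⟩ := irrChars_exists_degree hχ
  obtain ⟨V, hV, rfl⟩ := hχ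
  rw [V.char_one, Nat.cast_inj] at hd1
  have : Nontrivial V := Module.nontrivial_of_finrank_pos (R := ℂ) (by omega)
  let ρ : Representation ℂ N V := V.ρ.comp φ
  obtain ⟨σ, hσ⟩ := exists_irreducible_subrepresentation ρ
  have hN : (Nat.card N : ℂ) ≠ 0 := NeZero.ne _
  have := invertibleOfNonzero hN
  have hnorm := Representation.char_orthonormal σ.toRepresentation σ.toRepresentation
  rw [if_pos ⟨Representation.Equiv.refl _⟩] at hnorm
  refine ⟨σ.toRepresentation.character, ⟨FDRep.of σ.toRepresentation, ?_, rfl⟩, fun h0 ↦ ?_, ?_⟩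
  · rw [FDRep.simple_iff_char_is_norm_one]
    exact (inv_mul_eq_one₀ hN).1 hnorm |>.symm
  · have hmul := Representation.card_inv_mul_sum_char_mul_char_eq_finrank σ.toRepresentation ρ
    have : ∑ g, ρ.character g * σ.toRepresentation.character g⁻¹ = 0 := h0
    rw [this, mul_zero, eq_comm, Nat.cast_eq_zero] at hmul
    have := Module.finrank_zero_iff.1 hmul
    let ι : Representation.IntertwiningMap σ.toRepresentation ρ :=
      ⟨σ.toSubmodule.subtype, fun g ↦ rfl⟩
    have hι : σ.toSubmodule.subtype = 0 :=
      congrArg Representation.IntertwiningMap.toLinearMap (Subsingleton.elim ι 0)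
    have hbot : σ.toSubmodule = ⊥ := by
      rw [← Submodule.range_subtype σ.toSubmodule, hι, LinearMap.range_zero]
    have : Subsingleton σ.toSubmodule := Submodule.subsingleton_iff_eq_bot.2 hbot
    exact bot_ne_top (α := Subrepresentation σ.toRepresentation)
      (Subrepresentation.toSubmodule_injective (Subsingleton.elim _ _))
  · rw [Representation.char_one, V.char_one]
    simpa using Submodule.finrank_le σ.toSubmodule

/-- The unnormalised scalar product `⟨χ ∘ φ, ψ⟩` is a natural multiple of `|N|`, the factor being
the dimension of the space of intertwining maps. -/
theorem exists_multiplicity [Fintype N] (φ : N →* G) {χ : G → ℂ} (hχ : χ ∈ irrChars G)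
    {ψ : N → ℂ} (hψ : ψ ∈ irrChars N) :
    ∃ m : ℕ, ∑ n, χ (φ n) * ψ n⁻¹ = Nat.card N * m := by
  obtain ⟨V, -, rfl⟩ := hχ
  obtain ⟨W, -, rfl⟩ := hψ
  have hN : (Nat.card N : ℂ) ≠ 0 := NeZero.ne _
  have := invertibleOfNonzero hN
  let ρ : Representation ℂ N V := V.ρ.comp φ
  exact ⟨_, (inv_mul_eq_iff_eq_mul₀ hN).1
    (Representation.card_inv_mul_sum_char_mul_char_eq_finrank W.ρ ρ)⟩

/-- At most `|G| / |N|` irreducible characters of `G` lie above a given `ψ ∈ Irr(N)`. This is Bessel's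
inequality for the orthonormal family `|G|^(-1/2) χ` in `ℓ²(G)` and the vector `x` that extends `ψ`
by zero: `‖x‖² = |N|`, while each squared coefficient is `|N|² m² / |G|`, where `m ≥ 1` is the
multiplicity of `ψ` in `χ ∘ φ`. -/
theorem card_mul_card_le [Fintype N] [Fintype G] {φ : N →* G} (hφ : Function.Injective φ)
    {ψ : N → ℂ} (hψ : ψ ∈ irrChars N) (S : Finset (G → ℂ))
    (hS : ∀ χ ∈ S, χ ∈ irrChars G ∧ ∑ n, χ (φ n) * ψ n⁻¹ ≠ 0) :
    S.card * Nat.card N ≤ Nat.card G := by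
  classical
  have hG : (0 : ℝ) < Nat.card G := by exact_mod_cast Nat.card_pos
  have hN : (0 : ℝ) < Nat.card N := by exact_mod_cast Nat.card_pos
  let a : ℂ := ((√(Nat.card G : ℝ))⁻¹ : ℝ)
  have ha : a * a = (Nat.card G : ℂ)⁻¹ := by
    simp only [a]
    rw [← Complex.ofReal_mul, ← mul_inv, Real.mul_self_sqrt hG.le]
    simp
  have haconj : starRingEnd ℂ a = a := Complex.conj_ofReal _
  let v : S → EuclideanSpace ℂ G := fun χ ↦ WithLp.toLp 2 fun g ↦ a * χ.1 g
  let x : EuclideanSpace ℂ G := WithLp.toLp 2 fun g ↦ ∑ n, if φ n = g then ψ n else 0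
  have hx : ∀ n, x (φ n) = ψ n := fun n ↦ by simp [x, hφ.eq_iff]
  have hx0 : ∀ g, g ∉ Set.range φ → x g = 0 := fun g hg ↦
    Finset.sum_eq_zero fun n _ ↦ if_neg fun h ↦ hg ⟨n, h⟩
  have hv : Orthonormal ℂ v := by
    rw [orthonormal_iff_ite]
    intro χ χ'
    have h1 : inner ℂ (v χ) (v χ') = (Nat.card G : ℂ)⁻¹ * ∑ g, χ'.1 g * χ.1 g⁻¹ := by
      rw [PiLp.inner_apply, Finset.mul_sum]
      refine Finset.sum_congr rfl fun g _ ↦ ?_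
      rw [irrChars_inv (hS _ χ.2).1, ← ha]
      simp [v, haconj]
      ring
    rw [h1]
    split_ifs with h
    · rw [h, irrChars_sum_self (hS _ χ'.2).1]
      exact inv_mul_cancel₀ (NeZero.ne _)
    · rw [irrChars_sum_of_ne (hS _ χ'.2).1 (hS _ χ.2).1 fun e ↦ h (Subtype.ext e.symm), mul_zero]
  have hxn : ‖x‖ ^ 2 = Nat.card N := by
    rw [EuclideanSpace.norm_sq_eq, ← Fintype.sum_of_injective φ hφ (fun n ↦ ‖ψ n‖ ^ 2) _
      (fun g hg ↦ by simp [hx0 g hg]) (fun n ↦ by rw [hx])]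
    have h := irrChars_sum_self hψ
    simp only [irrChars_inv hψ, Complex.mul_conj'] at h
    exact_mod_cast h
  have hinner : ∀ χ : S, (Nat.card N : ℝ) ^ 2 / Nat.card G ≤ ‖inner ℂ (v χ) x‖ ^ 2 := by
    intro χ
    obtain ⟨hχ, hne⟩ := hS _ χ.2
    obtain ⟨m, hm⟩ := exists_multiplicity φ hχ hψ
    have hm1 : (1 : ℝ) ≤ m := by
      rw [hm] at hne
      exact_mod_cast Nat.one_le_iff_ne_zero.2 fun h ↦ hne (by simp [h])
    have h1 : inner ℂ (v χ) x = a * (Nat.card N * m) := by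
      rw [PiLp.inner_apply, ← Fintype.sum_of_injective φ hφ
        (fun n ↦ a * starRingEnd ℂ (χ.1 (φ n) * ψ n⁻¹)) _
        (fun g hg ↦ by simp [hx0 g hg]), ← Finset.mul_sum, ← map_sum, hm]
      · simp
      · intro n
        rw [hx, irrChars_inv hψ]
        simp [v, haconj]
        ring
    have h2 : ‖a‖ ^ 2 = (Nat.card G : ℝ)⁻¹ := by
      rw [pow_two, ← norm_mul, ha]
      simp
    rw [h1, norm_mul, mul_pow, h2, norm_mul, Complex.norm_natCast, Complex.norm_natCast,
      div_eq_inv_mul]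
    gcongr
    exact le_mul_of_one_le_right hN.le hm1
  have hB := hv.sum_inner_products_le x (s := Finset.univ)
  have hB' := (Finset.sum_le_sum fun χ _ ↦ hinner χ).trans hB
  rw [hxn, Finset.sum_const, Finset.card_univ, Fintype.card_coe, nsmul_eq_mul, ← mul_div_assoc,
    div_le_iff₀ hG, pow_two, ← mul_assoc, mul_comm (Nat.card N : ℝ) (Nat.card G : ℝ)] at hB'
  exact_mod_cast le_of_mul_le_mul_right hB' hN

theorem one_mem_irrChars [Finite G] : (fun _ ↦ 1 : G → ℂ) ∈ irrChars G := by
  simpa using linear_mem_irrChars (1 : G →* ℂˣ)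

/-- Every irreducible character lies above the trivial character of the trivial group, so
`card_mul_card_le` bounds their number by `|G|`. -/
theorem irrChars_finite [Finite G] : (irrChars G).Finite := by
  classical
  cases nonempty_fintype G
  by_contra h
  obtain ⟨S, hS, hc⟩ := Set.Infinite.exists_subset_card_eq h (Nat.card G + 1)
  have := card_mul_card_le (N := Unit) (G := G) (φ := 1) (fun _ _ _ ↦ rfl) one_mem_irrChars S
    fun χ hχ ↦ ⟨hS hχ, by
      obtain ⟨d, hd, h1⟩ := irrChars_exists_degree (hS hχ)
      simp [h1, hd.ne']⟩
  simp [hc] at this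

variable {A : Type} [CommGroup A]

/-- An irreducible character of `G` above the trivial character of `N` is linear: the `|A| = |G| / |N|`
characters inflated from the abelian quotient `A` lie above it, which already attains the bound
of `card_mul_card_le`. -/
theorem degree_eq_one_of_trivial_constituent [Fintype N] [Finite G] [Finite A] {φ : N →* G}
    {δ : G →* A} (hφ : Function.Injective φ) (hδ : Function.Surjective δ)
    (hφδ : ∀ n, δ (φ n) = 1) (hcard : Nat.card G = Nat.card A * Nat.card N)
    {χ : G → ℂ} (hχ : χ ∈ irrChars G) (h : ∑ n, χ (φ n) ≠ 0) : χ 1 = 1 := by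
  classical
  cases nonempty_fintype G
  have hfin : Finite (A →* ℂˣ) := Nat.finite_of_card_ne_zero (by
    rw [CommGroup.card_monoidHom_of_hasEnoughRootsOfUnity]; exact Nat.card_pos.ne')
  cases nonempty_fintype (A →* ℂˣ)
  let e : (A →* ℂˣ) → (G → ℂ) := fun l g ↦ l (δ g)
  have he : Function.Injective e := fun l l' hl ↦ by
    ext a
    obtain ⟨g, rfl⟩ := hδ a
    exact congrFun hl g
  by_contra hne
  have hnot : χ ∉ Finset.univ.image e := by
    intro hmem
    obtain ⟨l, -, rfl⟩ := Finset.mem_image.1 hmem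
    exact hne (by simp [e])
  have hle := card_mul_card_le hφ one_mem_irrChars (insert χ (Finset.univ.image e)) (by
    intro χ' hχ'
    rcases Finset.mem_insert.1 hχ' with rfl | hmem
    · exact ⟨hχ, by simpa using h⟩
    · obtain ⟨l, -, rfl⟩ := Finset.mem_image.1 hmem
      exact ⟨linear_mem_irrChars (l.comp δ), by simp [e, hφδ]⟩)
  rw [Finset.card_insert_of_notMem hnot, Finset.card_image_of_injective _ he, Finset.card_univ,
    ← Nat.card_eq_fintype_card, CommGroup.card_monoidHom_of_hasEnoughRootsOfUnity, hcard] at hle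
  have := Nat.le_of_mul_le_mul_right hle Nat.card_pos
  omega

/-- The comparison of zeta functions for an exact sequence `1 → N → G → A → 1` of finite groups
with `A` abelian. -/
theorem zeta_le_of_abelian_quotient [Finite N] [Finite G] [Finite A] {φ : N →* G}
    {δ : G →* A} (hφ : Function.Injective φ) (hδ : Function.Surjective δ)
    (hex : φ.range = δ.ker) {s : ℝ} (hs : 0 < s) :
    (∑ᶠ f ∈ {f ∈ irrChars G | 1 < (f 1).re}, ((f 1).re) ^ (-s)) ≤
      (Nat.card A : ℝ) * ((∑ᶠ f ∈ irrChars N, ((f 1).re) ^ (-s)) - 1) := by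
  classical
  cases nonempty_fintype N
  cases nonempty_fintype G
  have hcard : Nat.card G = Nat.card A * Nat.card N := by
    rw [← δ.ker.index_mul_card, Subgroup.index_ker, MonoidHom.range_eq_top.2 hδ, Subgroup.card_top,
      ← hex, ← Nat.card_congr (MonoidHom.ofInjective hφ).toEquiv]
  have hφδ : ∀ n, δ (φ n) = 1 := fun n ↦ MonoidHom.mem_ker.1 (hex ▸ ⟨n, rfl⟩)
  -- `P χ` is a chosen irreducible constituent of the restriction of `χ` to `N`.
  choose! P hPirr hPne hPle using fun (χ : G → ℂ) (hχ : χ ∈ irrChars G) ↦ exists_constituent φ hχ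
  have hfG : {f ∈ irrChars G | 1 < (f 1).re}.Finite := irrChars_finite.subset fun _ h ↦ h.1
  have hfN : (irrChars N).Finite := irrChars_finite
  rw [finsum_mem_eq_finite_toFinset_sum _ hfG, finsum_mem_eq_finite_toFinset_sum _ hfN]
  set S := hfG.toFinset
  set T := hfN.toFinset
  have hS : ∀ χ ∈ S, χ ∈ irrChars G ∧ 1 < (χ 1).re := fun χ h ↦ hfG.mem_toFinset.1 h
  have hone : (fun _ ↦ 1 : N → ℂ) ∈ T := hfN.mem_toFinset.2 one_mem_irrChars
  have hP : ∀ χ ∈ S, P χ ∈ T.erase (fun _ ↦ 1) := by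
    intro χ hχ
    obtain ⟨hirr, hdeg⟩ := hS χ hχ
    refine Finset.mem_erase.2 ⟨fun h1 ↦ ?_, hfN.mem_toFinset.2 (hPirr χ hirr)⟩
    have hne := hPne χ hirr
    simp only [h1, mul_one] at hne
    rw [degree_eq_one_of_trivial_constituent hφ hδ hφδ hcard hirr hne] at hdeg
    simp at hdeg
  have hfib : ∀ ψ ∈ T, (S.filter fun χ ↦ P χ = ψ).card ≤ Nat.card A := by
    intro ψ hψ
    have := card_mul_card_le hφ (hfN.mem_toFinset.1 hψ) (S.filter fun χ ↦ P χ = ψ) (by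
      intro χ hχ
      obtain ⟨hχS, rfl⟩ := Finset.mem_filter.1 hχ
      exact ⟨(hS χ hχS).1, hPne χ (hS χ hχS).1⟩)
    rw [hcard] at this
    exact Nat.le_of_mul_le_mul_right this Nat.card_pos
  have hpos : ∀ ψ ∈ irrChars N, 0 < (ψ 1).re := by
    intro ψ hψ
    obtain ⟨d, hd, h1⟩ := irrChars_exists_degree hψ
    simpa [h1] using hd
  calc ∑ χ ∈ S, ((χ 1).re) ^ (-s)
      ≤ ∑ χ ∈ S, ((P χ 1).re) ^ (-s) := Finset.sum_le_sum fun χ hχ ↦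
        Real.rpow_le_rpow_of_nonpos (hpos _ (hPirr χ (hS χ hχ).1)) (hPle χ (hS χ hχ).1)
          (by linarith)
    _ = ∑ ψ ∈ T.erase (fun _ ↦ 1), ∑ χ ∈ S with P χ = ψ, ((P χ 1).re) ^ (-s) :=
        (Finset.sum_fiberwise_of_maps_to hP _).symm
    _ ≤ ∑ ψ ∈ T.erase (fun _ ↦ 1), (Nat.card A : ℝ) * ((ψ 1).re) ^ (-s) := by
        refine Finset.sum_le_sum fun ψ hψ ↦ ?_
        have hψT := Finset.mem_of_mem_erase hψ
        rw [Finset.sum_congr rfl fun χ hχ ↦ by rw [(Finset.mem_filter.1 hχ).2], Finset.sum_const,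
          nsmul_eq_mul]
        have := (hpos ψ (hfN.mem_toFinset.1 hψT)).le
        have := hfib ψ hψT
        gcongr
    _ = (Nat.card A : ℝ) * ((∑ ψ ∈ T, ((ψ 1).re) ^ (-s)) - 1) := by
        rw [← Finset.mul_sum, ← Finset.add_sum_erase T _ hone]
        simp

end

/-- The comparison `ζ₀^{GL_n(q)}(s) ≤ (q−1)·(ζ^{SL_n(q)}(s) − 1)` from the proof of
Lemma 3.6. -/
theorem zeta_zero_GL_le_q_sub_one_mul_zeta_SL (n : ℕ) (hn : 2 ≤ n)
    (q : ℕ) (hq : IsPrimePow q) (s : ℝ) (hs : 0 < s)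
    (F : Type) [Field F] [Fintype F] (hF : Fintype.card F = q) :
    (∑ᶠ f ∈ {f ∈ irrChars (GL (Fin n) F) | 1 < (f 1).re}, ((f 1).re) ^ (-s)) ≤
      ((q : ℝ) - 1) *
        ((∑ᶠ f ∈ irrChars (Matrix.SpecialLinearGroup (Fin n) F), ((f 1).re) ^ (-s)) - 1) := by
  classical
  have hA : (Nat.card Fˣ : ℝ) = (q : ℝ) - 1 := by
    rw [Nat.card_units, Nat.card_eq_fintype_card, hF, Nat.cast_sub hq.one_lt.le, Nat.cast_one]
  rw [← hA]
  have : Nonempty (Fin n) := ⟨⟨0, by omega⟩⟩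
  refine zeta_le_of_abelian_quotient (φ := Matrix.SpecialLinearGroup.toGL)
    (δ := Matrix.GeneralLinearGroup.det) Matrix.SpecialLinearGroup.toGL_injective
    Matrix.GeneralLinearGroup.det_surjective ?_ hs
  ext g
  refine ⟨?_, fun hg ↦ ⟨⟨g, congrArg Units.val (MonoidHom.mem_ker.1 hg)⟩, Units.ext rfl⟩⟩
  rintro ⟨h, rfl⟩
  exact MonoidHom.mem_ker.2 (Matrix.SpecialLinearGroup.coeToGL_det h)
end

section
/- Let m ≥ 2 and r ≥ 1 be integers, let k ≥ 0 and 0 ≤ s < m be integers, and let a_{ij} (1 ≤ i ≤ m, 1 ≤ j ≤ r) be nonnegative integers such that Σ_{j=1}^r a_{ij} = k + 1 for 1 ≤ i ≤ s and Σ_{j=1}^r a_{ij} = k for s + 1 ≤ i ≤ m. Then s(m − s) ≤ Σ_{j=1}^r ( m·Σ_{i=1}^m a_{ij}² − (Σ_{i=1}^m a_{ij})² ). -/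
/-!
By Lagrange's identity, `m * ∑ xᵢ² - (∑ xᵢ)²` is half of `∑ᵢ ∑ₗ (xᵢ - xₗ)²`. Applied to every
column of `a`, it turns twice the right-hand side into a sum over pairs of rows `i`, `l` of
`∑ⱼ (aᵢⱼ - aₗⱼ)²`. Let `e` be the indicator of the first `s` rows, so that row `i` has sum
`k + e i`. Since `|x| ≤ x²` for integers, the term of the pair is at least the absolute difference
`|e i - e l| = (e i - e l)²` of the row sums. Lagrange's identity for `e` evaluates the sum of
these lower bounds as `2 * (m * s - s²)`.
-/

theorem lagrange_sum_sq_sub (m : ℕ) (x : Fin m → ℤ) :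
    ∑ i, ∑ l, (x i - x l) ^ 2 = 2 * ((m : ℤ) * ∑ i, x i ^ 2 - (∑ i, x i) ^ 2) := by
  have h : ∀ i l, (x i - x l) ^ 2 = x i ^ 2 + x l ^ 2 - 2 * (x i * x l) := fun i l => by ring
  simp only [h, Finset.sum_add_distrib, Finset.sum_sub_distrib, ← Finset.mul_sum,
    ← Finset.sum_mul, Finset.sum_const, Finset.card_univ, Fintype.card_fin, nsmul_eq_mul]
  ring

theorem abs_sum_le_sum_sq {r : ℕ} (x : Fin r → ℤ) : |∑ j, x j| ≤ ∑ j, x j ^ 2 := by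
  refine (Finset.abs_sum_le_sum_abs _ _).trans (Finset.sum_le_sum fun j _ => ?_)
  rw [← sq_abs]
  exact Int.le_self_sq _

/-- The key combinatorial inequality from the proof of Proposition 3.1. -/
theorem levi_alpha_combinatorial_inequality
    (m r k s : ℕ) (hm : 2 ≤ m) (hr : 1 ≤ r) (hs : s < m)
    (a : Fin m → Fin r → ℤ) (ha : ∀ i j, 0 ≤ a i j)
    (hrow1 : ∀ i : Fin m, (i : ℕ) < s → ∑ j, a i j = k + 1)
    (hrow2 : ∀ i : Fin m, s ≤ (i : ℕ) → ∑ j, a i j = k) :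
    (s : ℤ) * ((m : ℤ) - (s : ℤ)) ≤
      ∑ j, ((m : ℤ) * ∑ i, (a i j) ^ 2 - (∑ i, a i j) ^ 2) := by
  set e : Fin m → ℤ := fun i => if (i : ℕ) < s then 1 else 0 with he
  have hsq : ∀ i, e i ^ 2 = e i := fun i => by simp only [he]; split_ifs <;> norm_num
  have hsum : ∑ i, e i = s := by
    simp only [he, Finset.sum_boole, Fin.card_filter_val_lt]
    rw [min_eq_right hs.le]
  have hrow : ∀ i, ∑ j, a i j = k + e i := fun i => by
    simp only [he]
    split_ifs with h
    · exact hrow1 i h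
    · rw [hrow2 i (not_lt.mp h), add_zero]
  have hpair : ∀ i l, (e i - e l) ^ 2 ≤ ∑ j, (a i j - a l j) ^ 2 := fun i l => by
    refine le_trans ?_ (abs_sum_le_sum_sq _)
    rw [Finset.sum_sub_distrib, hrow, hrow, add_sub_add_left_eq_sub]
    simp only [he]
    split_ifs <;> norm_num
  have hle : ∑ i, ∑ l, (e i - e l) ^ 2 ≤ ∑ i, ∑ l, ∑ j, (a i j - a l j) ^ 2 :=
    Finset.sum_le_sum fun i _ => Finset.sum_le_sum fun l _ => hpair i l
  have hcols : ∑ i, ∑ l, ∑ j, (a i j - a l j) ^ 2 =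
      2 * ∑ j, ((m : ℤ) * ∑ i, (a i j) ^ 2 - (∑ i, a i j) ^ 2) := by
    rw [Finset.mul_sum]
    simp only [← lagrange_sum_sq_sub]
    rw [Finset.sum_comm (s := (Finset.univ : Finset (Fin r)))]
    exact Finset.sum_congr rfl fun i _ => Finset.sum_comm
  rw [hcols, lagrange_sum_sq_sub] at hle
  simp only [hsq, hsum] at hle
  linarith
end

section
/- Let r ≥ 1 be an integer and set m = 2r + 1. Let t, k_1, …, k_r be nonnegative integers (or nonnegative reals) and set n = t + Σ_{i=1}^r k_i. Then 2t² + t + Σ_{i=1}^r k_i² ≥ (2n² + n)/m − 1. -/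
/-!
By Cauchy-Schwarz, `∑ k_i²` is at least `r s²`, where `s` is the mean of the `k_i`. After
clearing the denominator `2r + 1`, the two sides with `∑ k_i²` replaced by `r s²` differ by
`r (u² + u + 2) + 1` with `u = 2t - s`, which is positive.
-/

/-- The Levi-dimension lower bound from the proof of Theorem 1.3(ii) for `Sp_{2n}`:
if `n = t + Σ k_i` and `m = 2r + 1`, then `2t² + t + Σ k_i² ≥ (2n² + n)/m − 1`. -/
theorem levi_dimension_lower_bound_Sp
    (r : ℕ) (hr : 1 ≤ r) (m : ℕ) (hm : m = 2 * r + 1)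
    (t : ℝ) (k : Fin r → ℝ) (ht : 0 ≤ t) (hk : ∀ i, 0 ≤ k i)
    (n : ℝ) (hn : n = t + ∑ i, k i) :
    (2 * n ^ 2 + n) / (m : ℝ) - 1 ≤ 2 * t ^ 2 + t + ∑ i, (k i) ^ 2 := by
  have hr0 : (0 : ℝ) < r := by exact_mod_cast hr
  have hm' : (m : ℝ) = 2 * r + 1 := by rw [hm]; push_cast; ring
  have hcs : (∑ i, k i) ^ 2 ≤ r * ∑ i, (k i) ^ 2 := by
    simpa using sq_sum_le_card_mul_sum_sq (s := Finset.univ) (f := k)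
  -- `s` is the mean of the `k i`, so Cauchy-Schwarz reads `r * s ^ 2 ≤ ∑ i, k i ^ 2`.
  obtain ⟨s, hs⟩ : ∃ s : ℝ, ∑ i, k i = r * s := ⟨(∑ i, k i) / r, by field_simp⟩
  rw [hs] at hcs hn
  have hQ : r * s ^ 2 ≤ ∑ i, (k i) ^ 2 := by
    refine le_of_mul_le_mul_left ?_ hr0
    linarith [mul_pow (r : ℝ) s 2]
  have hm0 : (0 : ℝ) < 2 * r + 1 := by positivity
  rw [hm', sub_le_iff_le_add, div_le_iff₀ hm0, hn]
  have hQm := mul_le_mul_of_nonneg_left hQ hm0.le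
  -- With `u = 2 * t - s`, the remaining difference is `r * (u ^ 2 + u + 2) + 1`.
  have hu : 0 ≤ r * ((2 * t - s) ^ 2 + (2 * t - s) + 2) :=
    mul_nonneg hr0.le (by nlinarith [sq_nonneg (2 * t - s + 1 / 2)])
  linarith
end
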